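/- arXiv:1911.04816 — 3 statements merged into one kernel-verified Lean document; each statement's English description precedes it below -/
import Mathlib

section
/- (Generalized Wierman coupling.) Let d ≥ 1, p ∈ (0, 1/2], let Λ ⊆ ℤ^d, S ⊆ Λ, and let (ξ^{(x)})_{x∈S} be a family of infinite words in Ξ. There exists a coupling of two random configurations (ω, ω̃), each marginally distributed according to ℙ_p, such that almost surely, for every y ∈ Λ: if in ω there exists x ∈ S joined to y by a path of 1-vertices staying in Λ, then in ω̃ there exists x ∈ S with x →^{ξ^{(x)}} y in Λ, i.e. a self-avoiding path x = v₀ ∼ ⋯ ∼ v_{n−1} = y contained in Λ with ω̃_{v_i} = ξ^{(x)}_i for all 0 ≤ i ≤ n−1. -/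
open MeasureTheory Set

namespace PercWords

/-- Vertices of the hypercubic lattice `ℤ^d`. -/
abbrev Vtx (d : ℕ) := Fin d → ℤ

/-- Site percolation configurations on `ℤ^d` (`true` = state 1, `false` = state 0). -/
abbrev Config (d : ℕ) := Vtx d → Bool

/-- `u ∼ v` : the Euclidean distance between `u` and `v` is `1`. -/
def adj {d : ℕ} (u v : Vtx d) : Prop := (∑ i, (u i - v i) ^ 2) = 1

/-- `μ` is Bernoulli site percolation with parameter `p` on the index set `ι`:
a probability measure under which, independently, each site has state `true`
with probability `p` and state `false` with probability `1 - p`. -/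
def IsBernoulliFam {ι : Type} (p : ℝ) (μ : Measure (ι → Bool)) : Prop :=
  IsProbabilityMeasure μ ∧
    ∀ (s : Finset ι) (f : ι → Bool),
      μ {ω | ∀ v ∈ s, ω v = f v} =
        ∏ v ∈ s, ENNReal.ofReal (if f v then p else 1 - p)

/-- `x ⇒^{ξ_{[a,b]}} y` inside `A` : there is a self-avoiding path
`x = v₀ ∼ ⋯ ∼ v_{b−a} = y` contained in `A` with `ω (v i) = ξ (a + i)` for all
`0 ≤ i ≤ b − a` (i.e. the finite word `ξ_{[a,b]}` is read along the path). -/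
def wordConnIn {d : ℕ} (ω : Config d) (ξ : ℕ → Bool) (a b : ℕ) (A : Set (Vtx d))
    (x y : Vtx d) : Prop :=
  a ≤ b ∧ ∃ γ : ℕ → Vtx d, γ 0 = x ∧ γ (b - a) = y ∧
    (∀ i < b - a, adj (γ i) (γ (i + 1))) ∧
    (∀ i ≤ b - a, ∀ j ≤ b - a, γ i = γ j → i = j) ∧
    (∀ i ≤ b - a, γ i ∈ A) ∧ (∀ i ≤ b - a, ω (γ i) = ξ (a + i))

/-- `y` is joined to `x` by a path of `1`-vertices staying inside `A`. -/
def oneConnIn {d : ℕ} (ω : Config d) (A : Set (Vtx d)) (x y : Vtx d) : Prop :=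
  ∃ n : ℕ, ∃ γ : ℕ → Vtx d, γ 0 = x ∧ γ n = y ∧
    (∀ i < n, adj (γ i) (γ (i + 1))) ∧ ∀ i ≤ n, γ i ∈ A ∧ ω (γ i) = true


section Abstract

set_option linter.unusedSectionVars false

/-- One exploration step: history `h`, next item, and the state read. -/
noncomputable def xstep {V : Type} (σ : List ((V × List V) × Bool) → Option (V × List V))
    (h : List ((V × List V) × Bool)) (t : V → ℤ) : List ((V × List V) × Bool) :=
  match σ h with
  | none => h
  | some a => (a, decide (t a.1 = 1)) :: h

/-- History after `n` steps. -/
noncomputable def xhist {V : Type} (σ : List ((V × List V) × Bool) → Option (V × List V))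
    (t : V → ℤ) : ℕ → List ((V × List V) × Bool)
  | 0 => []
  | n + 1 => xstep σ (xhist σ t n) t

/-- The explored vertices of a history. -/
def xpl {V : Type} (h : List ((V × List V) × Bool)) (v : V) : Prop := ∃ e ∈ h, e.1.1 = v

open scoped Classical in
/-- Flip the next vertex if required. -/
noncomputable def xact {V : Type} (σ : List ((V × List V) × Bool) → Option (V × List V))
    (fl : V × List V → Prop) (h : List ((V × List V) × Bool)) (t : V → ℤ) : V → ℤ :=
  match σ h with
  | none => t
  | some a => fun v => if v = a.1 ∧ fl a then - t v else t v

open scoped Classical in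
/-- Configuration flipped at the first `n` explored vertices. -/
noncomputable def xpsi {V : Type} (σ : List ((V × List V) × Bool) → Option (V × List V))
    (fl : V × List V → Prop) (n : ℕ) (t : V → ℤ) (v : V) : ℤ :=
  if ∃ e ∈ xhist σ t n, e.1.1 = v ∧ fl e.1 then - t v else t v

open scoped Classical in
/-- Configuration flipped at all explored vertices. -/
noncomputable def xpsiInf {V : Type} (σ : List ((V × List V) × Bool) → Option (V × List V))
    (fl : V × List V → Prop) (t : V → ℤ) (v : V) : ℤ :=
  if ∃ n, ∃ e ∈ xhist σ t n, e.1.1 = v ∧ fl e.1 then - t v else t v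

variable {V : Type} (σ : List ((V × List V) × Bool) → Option (V × List V))
  (fl : V × List V → Prop)

lemma xstep_none {h : List ((V × List V) × Bool)} (t : V → ℤ) (hs : σ h = none) :
    xstep σ h t = h := by simp [xstep, hs]

lemma xstep_some {h : List ((V × List V) × Bool)} {a} (t : V → ℤ) (hs : σ h = some a) :
    xstep σ h t = (a, decide (t a.1 = 1)) :: h := by simp [xstep, hs]

lemma xhist_mono (t : V → ℤ) {n m : ℕ} (h : n ≤ m) {e} (he : e ∈ xhist σ t n) :
    e ∈ xhist σ t m := by
  induction m, h using Nat.le_induction with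
  | base => exact he
  | succ m hm ih =>
    rw [xhist]
    rcases hs : σ (xhist σ t m) with _ | a
    · rwa [xstep_none σ t hs]
    · rw [xstep_some σ t hs]; exact List.mem_cons_of_mem _ ih

lemma xhist_congr (t t' : V → ℤ) (n : ℕ) (h : ∀ v, xpl (xhist σ t n) v → t v = t' v) :
    xhist σ t' n = xhist σ t n := by
  induction n with
  | zero => rfl
  | succ n ih =>
    have h1 : xhist σ t' n = xhist σ t n := ih fun v ⟨e, he, hv⟩ =>
      h v ⟨e, xhist_mono σ t (Nat.le_succ n) he, hv⟩
    rw [xhist, xhist, h1]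
    rcases hs : σ (xhist σ t n) with _ | a
    · rw [xstep_none σ t hs, xstep_none σ t' hs]
    · have : t a.1 = t' a.1 := by
        apply h
        rw [xhist, xstep_some σ t hs]
        exact ⟨_, List.mem_cons_self, rfl⟩
      rw [xstep_some σ t hs, xstep_some σ t' hs, this]

lemma xact_invol (h : List ((V × List V) × Bool)) (t : V → ℤ) :
    xact σ fl h (xact σ fl h t) = t := by
  unfold xact
  rcases hs : σ h with _ | a
  · rfl
  · funext v
    by_cases hv : v = a.1 ∧ fl a <;> simp [hv]

variable (hσ : ∀ h a, σ h = some a → ¬ xpl h a.1)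

include hσ in
lemma xhist_act (t : V → ℤ) (n : ℕ) :
    xhist σ (xact σ fl (xhist σ t n) t) n = xhist σ t n := by
  apply xhist_congr
  intro v hv
  unfold xact
  rcases hs : σ (xhist σ t n) with _ | a
  · rfl
  · have : v ≠ a.1 := fun h => hσ _ _ hs (h ▸ hv)
    simp [this]

include hσ in
lemma xpsi_succ (t : V → ℤ) (n : ℕ) :
    xpsi σ fl (n + 1) t = xpsi σ fl n (xact σ fl (xhist σ t n) t) := by
  funext v
  unfold xpsi
  rw [xhist_act σ fl hσ, xhist]
  unfold xact
  rcases hs : σ (xhist σ t n) with _ | a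
  · rw [xstep_none σ t hs]
  · rw [xstep_some σ t hs]
    by_cases hv : v = a.1
    · subst hv
      have h1 : ¬ ∃ e ∈ xhist σ t n, e.1.1 = a.1 ∧ fl e.1 := fun ⟨e, he, h, _⟩ =>
        hσ _ _ hs ⟨e, he, h⟩
      rw [if_neg h1]
      have h2 : (∃ e ∈ (a, decide (t a.1 = 1)) :: xhist σ t n, e.1.1 = a.1 ∧ fl e.1) ↔ fl a := by
        constructor
        · rintro ⟨e, he, h, h'⟩
          rcases List.mem_cons.1 he with rfl | he
          · exact h'
          · exact (h1 ⟨e, he, h, h'⟩).elim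
        · intro h
          exact ⟨_, List.mem_cons_self, rfl, h⟩
      dsimp only
      by_cases hf : fl a
      · rw [if_pos (h2.2 hf), if_pos ⟨rfl, hf⟩]
      · rw [if_neg fun h => hf (h2.1 h), if_neg fun h => hf h.2]
    · have h2 : (∃ e ∈ (a, decide (t a.1 = 1)) :: xhist σ t n, e.1.1 = v ∧ fl e.1) ↔
          ∃ e ∈ xhist σ t n, e.1.1 = v ∧ fl e.1 := by
        constructor
        · rintro ⟨e, he, h, h'⟩
          rcases List.mem_cons.1 he with rfl | he
          · exact (hv h.symm).elim
          · exact ⟨e, he, h, h'⟩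
        · rintro ⟨e, he, h⟩
          exact ⟨e, List.mem_cons_of_mem _ he, h⟩
      simp only [hv, false_and, if_false]
      by_cases hf : ∃ e ∈ xhist σ t n, e.1.1 = v ∧ fl e.1
      · rw [if_pos (h2.2 hf), if_pos hf]
      · rw [if_neg fun h => hf (h2.1 h), if_neg hf]

lemma xpsi_eventually (t : V → ℤ) (v : V) :
    ∀ᶠ n in Filter.atTop, xpsi σ fl n t v = xpsiInf σ fl t v := by
  unfold xpsi xpsiInf
  by_cases h : ∃ n, ∃ e ∈ xhist σ t n, e.1.1 = v ∧ fl e.1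
  · obtain ⟨n, e, he, h1⟩ := id h
    filter_upwards [Filter.eventually_ge_atTop n] with m hm
    rw [if_pos h, if_pos ⟨e, xhist_mono σ t hm he, h1⟩]
  · refine Filter.Eventually.of_forall fun n => ?_
    rw [if_neg h, if_neg fun h' => h ⟨n, h'⟩]

variable [Countable V]

lemma measurableSet_xhist (n : ℕ) (h : List ((V × List V) × Bool)) :
    MeasurableSet {t : V → ℤ | xhist σ t n = h} := by
  induction n generalizing h with
  | zero => simp only [xhist]; exact MeasurableSet.const _
  | succ n ih =>
    have : {t : V → ℤ | xhist σ t (n + 1) = h} =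
        ⋃ h0, ({t : V → ℤ | xhist σ t n = h0} ∩ {t | xstep σ h0 t = h}) := by
      ext t; simp [xhist]
    rw [this]
    refine MeasurableSet.iUnion fun h0 => (ih h0).inter ?_
    rcases hs : σ h0 with _ | a
    · simp only [xstep_none σ _ hs]; exact MeasurableSet.const _
    · simp only [xstep_some σ _ hs]
      have hf : Measurable fun t : V → ℤ => t a.1 := measurable_pi_apply a.1
      exact hf (MeasurableSet.of_discrete (s := {z : ℤ | (a, decide (z = 1)) :: h0 = h}))

variable (m : Measure ℤ) [IsProbabilityMeasure m] (hm : m.map (fun z => -z) = m)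

include hm in
lemma mp_xact (h : List ((V × List V) × Bool)) :
    MeasurePreserving (xact σ fl h) (Measure.infinitePi fun _ : V => m)
      (Measure.infinitePi fun _ : V => m) := by
  classical
  rcases hs : σ h with _ | a
  · have : xact σ fl h = id := by funext t; simp [xact, hs]
    rw [this]; exact MeasurePreserving.id _
  · have : xact σ fl h = fun t v => (if v = a.1 ∧ fl a then fun z : ℤ => -z else id) (t v) := by
      funext t v; simp only [xact, hs]; split_ifs <;> rfl
    rw [this]
    have hf : ∀ v : V, Measurable (if v = a.1 ∧ fl a then fun z : ℤ => -z else id) :=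
      fun v => measurable_of_countable _
    refine ⟨measurable_pi_lambda _ fun v => (hf v).comp (measurable_pi_apply v), ?_⟩
    rw [Measure.infinitePi_map_pi (fun _ : V => m) (f := fun v : V => (if v = a.1 ∧ fl a then fun z : ℤ => -z else id)) hf]
    congr 1
    funext v
    split_ifs
    · exact hm
    · exact Measure.map_id

include hσ hm in
lemma mp_theta (n : ℕ) :
    MeasurePreserving (fun t => xact σ fl (xhist σ t n) t) (Measure.infinitePi fun _ : V => m)
      (Measure.infinitePi fun _ : V => m) := by
  have key : ∀ B : Set (V → ℤ), (fun t => xact σ fl (xhist σ t n) t) ⁻¹' B =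
      ⋃ h, xact σ fl h ⁻¹' ({t | xhist σ t n = h} ∩ B) := by
    intro B
    ext t
    simp only [mem_preimage, mem_iUnion, mem_inter_iff, mem_ofPred_eq]
    constructor
    · intro ht
      exact ⟨_, xhist_act σ fl hσ t n, ht⟩
    · rintro ⟨h, h1, h2⟩
      have h3 := xhist_act σ fl hσ (xact σ fl h t) n
      rw [h1, xact_invol] at h3
      rwa [h3]
  have hM : ∀ B : Set (V → ℤ), MeasurableSet B → ∀ h,
      MeasurableSet (xact σ fl h ⁻¹' ({t | xhist σ t n = h} ∩ B)) := fun B hB h =>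
    (mp_xact σ fl m hm h).measurable ((measurableSet_xhist σ n h).inter hB)
  refine ⟨fun B hB => ?_, ?_⟩
  · rw [key]
    exact MeasurableSet.iUnion (hM B hB)
  ext B hB
  rw [Measure.map_apply (fun B hB => by rw [key]; exact MeasurableSet.iUnion (hM B hB)) hB, key,
    measure_iUnion _ (hM B hB)]
  · have : ∀ h, (Measure.infinitePi fun _ : V => m) (xact σ fl h ⁻¹' ({t | xhist σ t n = h} ∩ B)) =
        (Measure.infinitePi fun _ : V => m) ({t | xhist σ t n = h} ∩ B) := fun h =>
      (mp_xact σ fl m hm h).measure_preimage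
        ((measurableSet_xhist σ n h).inter hB).nullMeasurableSet
    simp only [this]
    rw [← measure_iUnion]
    · congr 1
      ext t; simp
    · intro h h' hne
      refine Set.disjoint_left.2 fun t ht ht' => hne ?_
      exact ht.1.symm.trans ht'.1
    · exact fun h => (measurableSet_xhist σ n h).inter hB
  · intro h h' hne
    refine Set.disjoint_left.2 fun t ht ht' => hne ?_
    have e1 := xhist_act σ fl hσ (xact σ fl h t) n
    have e2 := xhist_act σ fl hσ (xact σ fl h' t) n
    have a1 : xhist σ (xact σ fl h t) n = h := ht.1
    have a2 : xhist σ (xact σ fl h' t) n = h' := ht'.1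
    rw [a1, xact_invol] at e1
    rw [a2, xact_invol] at e2
    exact e1.symm.trans e2

include hσ hm in
lemma mp_xpsi (n : ℕ) :
    MeasurePreserving (xpsi σ fl n) (Measure.infinitePi fun _ : V => m)
      (Measure.infinitePi fun _ : V => m) := by
  induction n with
  | zero =>
    have : xpsi σ fl 0 = id := by funext t v; simp [xpsi, xhist]
    rw [this]; exact MeasurePreserving.id _
  | succ n ih =>
    have : xpsi σ fl (n + 1) = xpsi σ fl n ∘ fun t => xact σ fl (xhist σ t n) t := by
      funext t; exact xpsi_succ σ fl hσ t n
    rw [this]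
    exact ih.comp (mp_theta σ fl hσ m hm n)

include hσ hm in
lemma mp_xpsiInf :
    MeasurePreserving (xpsiInf σ fl) (Measure.infinitePi fun _ : V => m)
      (Measure.infinitePi fun _ : V => m) := by
  have hmeas : Measurable (xpsiInf σ fl) := by
    refine measurable_pi_lambda _ fun v => ?_
    refine measurable_of_tendsto_metrizable (f := fun n t => xpsi σ fl n t v)
      (fun n => (measurable_pi_apply v).comp (mp_xpsi σ fl hσ m hm n).measurable) ?_
    rw [tendsto_pi_nhds]
    intro t
    exact tendsto_const_nhds.congr' ((xpsi_eventually σ fl t v).mono fun n h => h.symm)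
  refine ⟨hmeas, ?_⟩
  apply Measure.eq_infinitePi
  intro s A hA
  have hB : MeasurableSet (Set.pi (s : Set V) A) :=
    MeasurableSet.pi s.countable_toSet fun i _ => hA i
  rw [Measure.map_apply hmeas hB]
  have h1 := tendsto_measure_of_tendsto_indicator_of_isFiniteMeasure (L := Filter.atTop)
    (A := xpsiInf σ fl ⁻¹' (Set.pi (s : Set V) A))
    (As := fun n : ℕ => xpsi σ fl n ⁻¹' (Set.pi (s : Set V) A))
    (Measure.infinitePi fun _ : V => m) (fun n => (mp_xpsi σ fl hσ m hm n).measurable hB) (by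
      intro t
      have : ∀ᶠ n in Filter.atTop, ∀ v ∈ s, xpsi σ fl n t v = xpsiInf σ fl t v :=
        (Filter.eventually_all_finset s).2 fun v _ => xpsi_eventually σ fl t v
      filter_upwards [this] with n hn
      simp only [mem_preimage, Set.mem_pi, Finset.mem_coe]
      exact forall₂_congr fun v hv => by rw [hn v hv])
  have h2 : ∀ n, (Measure.infinitePi fun _ : V => m) (xpsi σ fl n ⁻¹' (Set.pi (s : Set V) A)) =
      ∏ i ∈ s, m (A i) := fun n => by
    rw [(mp_xpsi σ fl hσ m hm n).measure_preimage hB.nullMeasurableSet,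
      Measure.infinitePi_pi _ fun i _ => hA i]
  simp only [h2] at h1
  exact tendsto_nhds_unique h1 tendsto_const_nhds

end Abstract

lemma bern_unique {ι : Type} {p : ℝ} {μ ν : Measure (ι → Bool)} (hμ : IsBernoulliFam p μ)
    (hν : IsBernoulliFam p ν) : μ = ν := by
  classical
  have := hμ.1
  have := hν.1
  have hp : IsProjectiveLimit μ (fun I : Finset ι => ν.map I.restrict) := by
    intro I
    apply Measure.ext_of_singleton
    intro f
    rw [Measure.map_apply (Finset.measurable_restrict I) (measurableSet_singleton _),
      Measure.map_apply (Finset.measurable_restrict I) (measurableSet_singleton _)]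
    have : I.restrict (π := fun _ : ι => Bool) ⁻¹' {f} =
        {ω : ι → Bool | ∀ v ∈ I, ω v = (fun v => if h : v ∈ I then f ⟨v, h⟩ else true) v} := by
      ext ω
      simp only [mem_preimage, mem_singleton_iff, mem_ofPred_eq, funext_iff, Finset.restrict]
      constructor
      · intro h v hv; simp [hv, ← h ⟨v, hv⟩]
      · rintro h ⟨v, hv⟩; simp [hv, h v hv]
    rw [this, hμ.2, hν.2]
  have : ∀ I : Finset ι, IsFiniteMeasure ((fun I : Finset ι => ν.map I.restrict) I) :=
    fun I => by dsimp only; infer_instance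
  exact hp.unique (fun I => rfl)

/-- The three-point law. -/
noncomputable def law3 (p : ℝ) : Measure ℤ :=
  ENNReal.ofReal p • Measure.dirac 1 + ENNReal.ofReal p • Measure.dirac (-1) +
    ENNReal.ofReal (1 - 2 * p) • Measure.dirac 0

lemma law3_prob {p : ℝ} (hp0 : 0 < p) (hp : p ≤ 1 / 2) : IsProbabilityMeasure (law3 p) := by
  constructor
  simp only [law3, Measure.add_apply, Measure.smul_apply, measure_univ, smul_eq_mul, mul_one]
  rw [← ENNReal.ofReal_add hp0.le hp0.le, ← ENNReal.ofReal_add (by linarith) (by linarith)]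
  norm_num
  ring

lemma law3_neg (p : ℝ) : (law3 p).map (fun z => -z) = law3 p := by
  have hm : Measurable (fun z : ℤ => -z) := measurable_of_countable _
  simp only [law3, Measure.map_add _ _ hm, Measure.map_smul, Measure.map_dirac]
  simp only [neg_neg, neg_zero]
  rw [add_comm (ENNReal.ofReal p • Measure.dirac (-1 : ℤ))]

lemma bern_map {V : Type} {p : ℝ} (hp0 : 0 < p) (hp : p ≤ 1 / 2) [IsProbabilityMeasure (law3 p)] :
    IsBernoulliFam p ((Measure.infinitePi fun _ : V => law3 p).map
      (fun t v => decide (t v = 1))) := by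
  have hf : Measurable (fun (t : V → ℤ) v => decide (t v = 1)) :=
    measurable_pi_lambda _ fun v =>
      (measurable_of_countable (fun z : ℤ => decide (z = 1))).comp (measurable_pi_apply v)
  refine ⟨Measure.isProbabilityMeasure_map hf.aemeasurable, fun s f => ?_⟩
  have hs : MeasurableSet {ω : V → Bool | ∀ v ∈ s, ω v = f v} := by
    have : {ω : V → Bool | ∀ v ∈ s, ω v = f v} = Set.pi (s : Set V) fun v => {f v} := by
      ext; simp
    rw [this]
    exact MeasurableSet.pi s.countable_toSet fun i _ => measurableSet_singleton _
  rw [Measure.map_apply hf hs]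
  have : (fun (t : V → ℤ) v => decide (t v = 1)) ⁻¹' {ω : V → Bool | ∀ v ∈ s, ω v = f v} =
      Set.pi (s : Set V) fun v => {z : ℤ | decide (z = 1) = f v} := by
    ext; simp
  rw [this, Measure.infinitePi_pi _ fun i _ => MeasurableSet.of_discrete]
  refine Finset.prod_congr rfl fun v _ => ?_
  cases f v
  · simp [law3, Set.indicator]
    rw [← ENNReal.ofReal_add hp0.le (by linarith)]
    congr 1; ring
  · simp [law3, Set.indicator]

section Explore

variable {d : ℕ} (Λ S : Set (Vtx d)) (ξf : Vtx d → ℕ → Bool)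

/-- Origin of a path stored as head and tail (in reverse order). -/
def porg (a : Vtx d × List (Vtx d)) : Vtx d := (a.1 :: a.2).getLast (List.cons_ne_nil _ _)

/-- Eligible path extensions. -/
def pelig (h : List ((Vtx d × List (Vtx d)) × Bool)) (a : Vtx d × List (Vtx d)) : Prop :=
  ¬ xpl h a.1 ∧ a.1 ∈ Λ ∧ ((a.2 = [] ∧ a.1 ∈ S) ∨
    ∃ u l, a.2 = u :: l ∧ ((u, l), true) ∈ h ∧ adj u a.1)

/-- Flip criterion: the wanted letter is `0`. -/
def pfl (a : Vtx d × List (Vtx d)) : Prop := ξf (porg a) a.2.length = false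

open scoped Classical in
/-- The exploration strategy: the first eligible path. -/
noncomputable def pstrat (h : List ((Vtx d × List (Vtx d)) × Bool)) :
    Option (Vtx d × List (Vtx d)) :=
  letI : Encodable (Vtx d × List (Vtx d)) := Encodable.ofCountable _
  if hh : ∃ a, pelig Λ S h a then
    some (Function.argminOn (fun a : Vtx d × List (Vtx d) => Encodable.encode a)
      {a | pelig Λ S h a} hh)
  else none

lemma pstrat_elig {h a} (ha : pstrat Λ S h = some a) : pelig Λ S h a := by
  unfold pstrat at ha
  split_ifs at ha with hh
  rw [Option.some.injEq] at ha
  subst ha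
  exact Function.argminOn_mem _ {a | pelig Λ S h a} hh

lemma pstrat_exists : ∃ e : Vtx d × List (Vtx d) → ℕ, Function.Injective e ∧
    ∀ h b, pelig Λ S h b → ∃ a, pstrat Λ S h = some a ∧ e a ≤ e b := by
  letI : Encodable (Vtx d × List (Vtx d)) := Encodable.ofCountable _
  refine ⟨Encodable.encode, Encodable.encode_injective, fun h b hb => ?_⟩
  have hh : ∃ a, pelig Λ S h a := ⟨b, hb⟩
  refine ⟨_, by unfold pstrat; rw [dif_pos hh], ?_⟩
  exact Function.argminOn_le (fun a : Vtx d × List (Vtx d) => Encodable.encode a)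
      {a | pelig Λ S h a} hb

lemma pstrat_new : ∀ h a, pstrat Λ S h = some a → ¬ xpl h a.1 :=
  fun _ _ ha => (pstrat_elig Λ S ha).1

lemma pexplored (t : Vtx d → ℤ) (n : ℕ) (a : Vtx d × List (Vtx d))
    (ha : pelig Λ S (xhist (pstrat Λ S) t n) a) : ∃ k, xpl (xhist (pstrat Λ S) t k) a.1 := by
  by_contra! hno
  have hel : ∀ k, pelig Λ S (xhist (pstrat Λ S) t (n + k)) a := by
    intro k
    refine ⟨hno _, ha.2.1, ?_⟩
    rcases ha.2.2 with h | ⟨u, l, h1, h2, h3⟩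
    · exact Or.inl h
    · exact Or.inr ⟨u, l, h1, xhist_mono _ t (Nat.le_add_right _ _) h2, h3⟩
  obtain ⟨e, einj, he⟩ := pstrat_exists Λ S
  choose b hb hle using fun k => he _ _ (hel k)
  have hbin : ∀ k, (b k, decide (t (b k).1 = 1)) ∈ xhist (pstrat Λ S) t (n + k + 1) := by
    intro k
    rw [xhist, xstep_some _ t (hb k)]
    exact List.mem_cons_self
  have hlt : ∀ j k, j < k → b j ≠ b k := by
    intro j k hjk hbe
    refine pstrat_new Λ S _ _ (hb k) ⟨_, xhist_mono _ t (by omega) (hbin j), ?_⟩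
    rw [← hbe]
  have binj : Function.Injective b := by
    intro j k hjk
    by_contra hne
    rcases lt_or_gt_of_ne hne with h | h
    · exact hlt _ _ h hjk
    · exact hlt _ _ h hjk.symm
  have hfin : (Set.range (e ∘ b)).Finite :=
    (Set.finite_Iic (e a)).subset (by rintro _ ⟨k, rfl⟩; exact hle k)
  exact Set.infinite_range_of_injective (einj.comp binj) hfin

lemma xhist_val {t : Vtx d → ℤ} {n : ℕ} {e} (he : e ∈ xhist (pstrat Λ S) t n) :
    e.2 = decide (t e.1.1 = 1) := by
  induction n with
  | zero => simp [xhist] at he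
  | succ n ih =>
    rw [xhist] at he
    rcases hs : pstrat Λ S (xhist (pstrat Λ S) t n) with _ | a
    · rw [xstep_none _ t hs] at he; exact ih he
    · rw [xstep_some _ t hs] at he
      rcases List.mem_cons.1 he with rfl | he
      · rfl
      · exact ih he

lemma xhist_uniq {t : Vtx d → ℤ} {n : ℕ} {e e'} (he : e ∈ xhist (pstrat Λ S) t n)
    (he' : e' ∈ xhist (pstrat Λ S) t n) (h : e.1.1 = e'.1.1) : e = e' := by
  induction n with
  | zero => simp [xhist] at he
  | succ n ih =>
    rw [xhist] at he he'
    rcases hs : pstrat Λ S (xhist (pstrat Λ S) t n) with _ | a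
    · rw [xstep_none _ t hs] at he he'; exact ih he he'
    · rw [xstep_some _ t hs] at he he'
      rcases List.mem_cons.1 he with rfl | he <;> rcases List.mem_cons.1 he' with rfl | he'
      · rfl
      · exact (pstrat_new Λ S _ _ hs ⟨_, he', h.symm⟩).elim
      · exact (pstrat_new Λ S _ _ hs ⟨_, he, h⟩).elim
      · exact ih he he'

lemma xpsiInf_val {t : Vtx d → ℤ} {n : ℕ} {a}
    (he : (a, true) ∈ xhist (pstrat Λ S) t n) :
    decide (xpsiInf (pstrat Λ S) (pfl ξf) t a.1 = 1) = ξf (porg a) a.2.length := by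
  have h1 : t a.1 = 1 := by simpa using (xhist_val Λ S he).symm
  have h2 : (∃ n, ∃ e ∈ xhist (pstrat Λ S) t n, e.1.1 = a.1 ∧ pfl ξf e.1) ↔ pfl ξf a := by
    constructor
    · rintro ⟨k, e, hk, hv, hf⟩
      have := xhist_uniq Λ S (xhist_mono _ t (le_max_left n k) he)
        (xhist_mono _ t (le_max_right n k) hk) hv.symm
      rw [← this] at hf
      exact hf
    · intro h
      exact ⟨n, _, he, rfl, h⟩
  unfold xpsiInf
  by_cases hf : pfl ξf a
  · rw [if_pos (h2.2 hf), h1]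
    unfold pfl at hf
    rw [hf]; rfl
  · rw [if_neg fun h => hf (h2.1 h), h1]
    unfold pfl at hf
    rw [Bool.not_eq_false] at hf
    rw [hf]; rfl

lemma pinv (t : Vtx d → ℤ) (n : ℕ) (a : Vtx d × List (Vtx d))
    (ha : (a, true) ∈ xhist (pstrat Λ S) t n) :
    porg a ∈ S ∧ ∃ γ : ℕ → Vtx d, γ 0 = porg a ∧ γ a.2.length = a.1 ∧
      (∀ i < a.2.length, adj (γ i) (γ (i + 1))) ∧
      (∀ i ≤ a.2.length, ∀ j ≤ a.2.length, γ i = γ j → i = j) ∧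
      (∀ i ≤ a.2.length, γ i ∈ Λ) ∧
      (∀ i ≤ a.2.length, decide (xpsiInf (pstrat Λ S) (pfl ξf) t (γ i) = 1) = ξf (porg a) i) ∧
      (∀ i ≤ a.2.length, xpl (xhist (pstrat Λ S) t n) (γ i)) := by
  induction n generalizing a with
  | zero => simp [xhist] at ha
  | succ n ih =>
    have hval := xpsiInf_val Λ S ξf ha
    have hmono : ∀ v, xpl (xhist (pstrat Λ S) t n) v → xpl (xhist (pstrat Λ S) t (n + 1)) v :=
      fun v ⟨e, he, hv⟩ => ⟨e, xhist_mono _ t (Nat.le_succ n) he, hv⟩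
    by_cases hold : (a, true) ∈ xhist (pstrat Λ S) t n
    · obtain ⟨h0, γ, h1, h2, h3, h4, h5, h6, h7⟩ := ih a hold
      exact ⟨h0, γ, h1, h2, h3, h4, h5, h6, fun i hi => hmono _ (h7 i hi)⟩
    have hxa : xpl (xhist (pstrat Λ S) t (n + 1)) a.1 := ⟨_, ha, rfl⟩
    have hel : pelig Λ S (xhist (pstrat Λ S) t n) a := by
      rw [xhist] at ha
      rcases hs : pstrat Λ S (xhist (pstrat Λ S) t n) with _ | b
      · rw [xstep_none _ t hs] at ha; exact (hold ha).elim
      · rw [xstep_some _ t hs] at ha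
        rcases List.mem_cons.1 ha with h | h
        · have : a = b := congrArg Prod.fst h
          rw [this]; exact pstrat_elig Λ S hs
        · exact (hold h).elim
    obtain ⟨hnew, hΛ, hcase⟩ := hel
    obtain ⟨v, l'⟩ := a
    simp only at hnew hΛ hcase hval hxa ⊢
    rcases hcase with ⟨rfl, hvS⟩ | ⟨u, l, rfl, hu, huv⟩
    · refine ⟨hvS, fun _ => v, rfl, rfl, ?_, ?_, fun _ _ => hΛ, ?_, fun _ _ => hxa⟩
      · intro i hi; simp at hi
      · intro i hi j hj _
        simp only [List.length_nil] at hi hj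
        omega
      · intro i hi
        simp only [List.length_nil, Nat.le_zero] at hi
        subst hi
        exact hval
    · obtain ⟨h0, γ, h1, h2, h3, h4, h5, h6, h7⟩ := ih (u, l) hu
      have ho : porg (v, u :: l) = porg (u, l) := by simp [porg]
      rw [ho] at hval ⊢
      simp only [List.length_cons] at h2 h3 h4 h5 h6 h7 hval ⊢
      have hold : ∀ i ≤ l.length, Function.update γ (l.length + 1) v i = γ i := fun i hi =>
        Function.update_of_ne (by omega) _ _
      have hlast : Function.update γ (l.length + 1) v (l.length + 1) = v :=
        Function.update_self _ _ _
      have hsplit : ∀ i, i ≤ l.length + 1 → i ≤ l.length ∨ i = l.length + 1 := by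
        intro i hi; omega
      have hne : ∀ i ≤ l.length, γ i ≠ v := fun i hi h => hnew (h ▸ h7 i hi)
      refine ⟨h0, Function.update γ (l.length + 1) v, ?_, hlast, ?_, ?_, ?_, ?_, ?_⟩
      · rw [hold 0 (Nat.zero_le _), h1]
      · intro i hi
        rcases hsplit (i + 1) hi with h | h
        · rw [hold i (by omega), hold _ h]; exact h3 i (by omega)
        · obtain rfl : i = l.length := by omega
          rw [hlast, hold _ le_rfl, h2]; exact huv
      · intro i hi j hj hij
        rcases hsplit i hi with h | rfl <;> rcases hsplit j hj with h' | rfl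
        · rw [hold _ h, hold _ h'] at hij; exact h4 i h j h' hij
        · rw [hold _ h, hlast] at hij; exact (hne i h hij).elim
        · rw [hold _ h', hlast] at hij; exact (hne j h' hij.symm).elim
        · rfl
      · intro i hi
        rcases hsplit i hi with h | rfl
        · rw [hold _ h]; exact h5 i h
        · rw [hlast]; exact hΛ
      · intro i hi
        rcases hsplit i hi with h | rfl
        · rw [hold _ h]; exact h6 i h
        · rw [hlast]; exact hval
      · intro i hi
        rcases hsplit i hi with h | rfl
        · rw [hold _ h]; exact hmono _ (h7 i h)
        · rw [hlast]; exact hxa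

lemma preach (t : Vtx d → ℤ) {x y : Vtx d} (hx : x ∈ S)
    (h : oneConnIn (fun v => decide (t v = 1)) Λ x y) :
    ∃ n l, ((y, l), true) ∈ xhist (pstrat Λ S) t n := by
  obtain ⟨N, γ, h0, hN, hadj, hall⟩ := h
  have hexp : ∀ v, t v = 1 → (∃ k, xpl (xhist (pstrat Λ S) t k) v) →
      ∃ n l, ((v, l), true) ∈ xhist (pstrat Λ S) t n := by
    rintro v hv ⟨k, ⟨⟨v', l⟩, r⟩, he, rfl⟩
    have := xhist_val Λ S he
    simp only at this hv
    rw [hv] at this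
    simp only [decide_true] at this
    subst this
    exact ⟨k, l, he⟩
  have key : ∀ i ≤ N, ∃ n l, ((γ i, l), true) ∈ xhist (pstrat Λ S) t n := by
    intro i
    induction i with
    | zero =>
      intro hi
      apply hexp _ (by simpa using (hall 0 hi).2)
      by_cases hx0 : xpl (xhist (pstrat Λ S) t 0) (γ 0)
      · exact ⟨0, hx0⟩
      · exact pexplored Λ S t 0 (γ 0, []) ⟨hx0, (hall 0 hi).1, Or.inl ⟨rfl, h0 ▸ hx⟩⟩
    | succ i ih =>
      intro hi
      obtain ⟨n, l, hl⟩ := ih (by omega)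
      apply hexp _ (by simpa using (hall _ hi).2)
      by_cases hx0 : xpl (xhist (pstrat Λ S) t n) (γ (i + 1))
      · exact ⟨n, hx0⟩
      · exact pexplored Λ S t n (γ (i + 1), γ i :: l)
          ⟨hx0, (hall _ hi).1, Or.inr ⟨_, _, rfl, hl, hadj i (by omega)⟩⟩
  exact hN ▸ key N le_rfl

end Explore

lemma cyl_open {d : ℕ} (n : ℕ) (γ : ℕ → Vtx d) (c : ℕ → Bool) :
    IsOpen {ω : Config d | ∀ i ≤ n, ω (γ i) = c i} := by
  have : {ω : Config d | ∀ i ≤ n, ω (γ i) = c i} =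
      ⋂ i ∈ Set.Iic n, {ω : Config d | ω (γ i) = c i} := by
    ext; simp
  rw [this]
  refine (Set.finite_Iic n).isOpen_biInter fun i _ => ?_
  have hc : Continuous fun ω : Config d => ω (γ i) := continuous_apply (γ i)
  exact hc.isOpen_preimage _ (isOpen_discrete {c i})

lemma one_open {d : ℕ} (A : Set (Vtx d)) (x y : Vtx d) :
    IsOpen {ω : Config d | oneConnIn ω A x y} := by
  have : {ω : Config d | oneConnIn ω A x y} = ⋃ n : ℕ, ⋃ γ : ℕ → Vtx d,
      ⋃ _ : γ 0 = x ∧ γ n = y ∧ (∀ i < n, adj (γ i) (γ (i + 1))) ∧ ∀ i ≤ n, γ i ∈ A,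
        {ω : Config d | ∀ i ≤ n, ω (γ i) = (fun _ => true) i} := by
    ext ω
    simp only [mem_iUnion, mem_ofPred_eq, oneConnIn, exists_prop]
    refine exists₂_congr fun n γ => ⟨?_, ?_⟩
    · rintro ⟨h0, h1, h2, h3⟩
      exact ⟨⟨h0, h1, h2, fun i hi => (h3 i hi).1⟩, fun i hi => (h3 i hi).2⟩
    · rintro ⟨⟨h0, h1, h2, h3⟩, h4⟩
      exact ⟨h0, h1, h2, fun i hi => ⟨h3 i hi, h4 i hi⟩⟩
  rw [this]
  exact isOpen_iUnion fun n => isOpen_iUnion fun γ => isOpen_iUnion fun _ => cyl_open _ _ _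

lemma word_open {d : ℕ} (A : Set (Vtx d)) (ξ : ℕ → Bool) (a b : ℕ) (x y : Vtx d) :
    IsOpen {ω : Config d | wordConnIn ω ξ a b A x y} := by
  have : {ω : Config d | wordConnIn ω ξ a b A x y} = ⋃ γ : ℕ → Vtx d,
      ⋃ _ : a ≤ b ∧ γ 0 = x ∧ γ (b - a) = y ∧ (∀ i < b - a, adj (γ i) (γ (i + 1))) ∧
        (∀ i ≤ b - a, ∀ j ≤ b - a, γ i = γ j → i = j) ∧ (∀ i ≤ b - a, γ i ∈ A),
        {ω : Config d | ∀ i ≤ b - a, ω (γ i) = (fun i => ξ (a + i)) i} := by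
    ext ω
    simp only [mem_iUnion, mem_ofPred_eq, wordConnIn, exists_prop]
    constructor
    · rintro ⟨h, γ, h0, h1, h2, h3, h4, h5⟩
      exact ⟨γ, ⟨h, h0, h1, h2, h3, h4⟩, h5⟩
    · rintro ⟨γ, ⟨h, h0, h1, h2, h3, h4⟩, h5⟩
      exact ⟨h, γ, h0, h1, h2, h3, h4, h5⟩
  rw [this]
  exact isOpen_iUnion fun γ => isOpen_iUnion fun _ => cyl_open _ _ _

lemma event_meas {d : ℕ} (Λ S : Set (Vtx d)) (ξf : Vtx d → ℕ → Bool) :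
    MeasurableSet {w : Config d × Config d | ∀ y ∈ Λ,
        (∃ x ∈ S, oneConnIn w.1 Λ x y) →
        ∃ x ∈ S, ∃ t : ℕ, wordConnIn w.2 (ξf x) 0 t Λ x y} := by
  have h1 : ∀ x y, Measurable fun w : Config d × Config d => oneConnIn w.1 Λ x y := fun x y =>
    Measurable.comp (g := fun ω : Config d => oneConnIn ω Λ x y)
      (measurableSet_setOfPred.1 (one_open Λ x y).measurableSet) measurable_fst
  have h2 : ∀ x y t, Measurable fun w : Config d × Config d => wordConnIn w.2 (ξf x) 0 t Λ x y :=
    fun x y t => Measurable.comp (g := fun ω : Config d => wordConnIn ω (ξf x) 0 t Λ x y)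
      (measurableSet_setOfPred.1 (word_open Λ (ξf x) 0 t x y).measurableSet) measurable_snd
  apply Measurable.setOf
  refine Measurable.forall fun y => Measurable.forall fun _ => Measurable.imp ?_ ?_
  · exact Measurable.exists fun x => measurable_const.and (h1 x y)
  · exact Measurable.exists fun x => measurable_const.and (Measurable.exists fun t => h2 x y t)

/-- **Generalized Wierman coupling** : for `p ∈ (0, 1/2]`, `S ⊆ Λ ⊆ ℤ^d` and a family
of words `(ξ^{(x)})_{x ∈ S}`, there is a coupling `(ω, ω̃)` of two Bernoulli-`p`
configurations such that almost surely, every `y ∈ Λ` joined to `S` by a path of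
`1`-vertices in `Λ` in `ω` is reached from some `x ∈ S`, in `ω̃`, by a self-avoiding
path in `Λ` along which the word `ξ^{(x)}` is read. -/
theorem wierman_coupling
    (d : ℕ) (hd : 1 ≤ d) (p : ℝ) (hp0 : 0 < p) (hp : p ≤ 1 / 2)
    (μ : Measure (Config d)) (hμ : IsBernoulliFam p μ)
    (Λ : Set (Vtx d)) (S : Set (Vtx d)) (hS : S ⊆ Λ)
    (ξf : Vtx d → ℕ → Bool) :
    ∃ ν : Measure (Config d × Config d),
      ν.map Prod.fst = μ ∧ ν.map Prod.snd = μ ∧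
      ∀ᵐ w ∂ν, ∀ y ∈ Λ,
        (∃ x ∈ S, oneConnIn w.1 Λ x y) →
        ∃ x ∈ S, ∃ t : ℕ, wordConnIn w.2 (ξf x) 0 t Λ x y := by
  have := law3_prob hp0 hp
  have hβ : Measurable (fun (t : Vtx d → ℤ) v => decide (t v = 1)) :=
    measurable_pi_lambda _ fun v =>
      (measurable_of_countable (fun z : ℤ => decide (z = 1))).comp (measurable_pi_apply v)
  have hbern : (Measure.infinitePi fun _ : Vtx d => law3 p).map
      (fun (t : Vtx d → ℤ) v => decide (t v = 1)) = μ := bern_unique (bern_map hp0 hp) hμ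
  have hΨ := mp_xpsiInf (pstrat Λ S) (pfl ξf) (pstrat_new Λ S) (law3 p) (law3_neg p)
  have hF : Measurable (fun t : Vtx d → ℤ => ((fun v => decide (t v = 1) : Config d),
      (fun v => decide (xpsiInf (pstrat Λ S) (pfl ξf) t v = 1) : Config d))) :=
    hβ.prodMk (hβ.comp hΨ.measurable)
  refine ⟨(Measure.infinitePi fun _ : Vtx d => law3 p).map _, ?_, ?_,
    (ae_map_iff hF.aemeasurable (event_meas Λ S ξf)).2 (Filter.Eventually.of_forall ?_)⟩
  · rw [Measure.map_map measurable_fst hF]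
    exact hbern
  · rw [Measure.map_map measurable_snd hF]
    conv_rhs => rw [← hbern, ← hΨ.map_eq, Measure.map_map hβ hΨ.measurable]
    rfl
  · rintro t y hy ⟨x, hx, hxy⟩
    obtain ⟨n, l, hl⟩ := preach Λ S t hx hxy
    obtain ⟨h0, γ, h1, h2, h3, h4, h5, h6, h7⟩ := pinv Λ S ξf t n (y, l) hl
    refine ⟨_, h0, l.length, Nat.zero_le _, γ, h1, ?_⟩
    simp only [Nat.sub_zero, Nat.zero_add]
    exact ⟨h2, h3, h4, h5, h6⟩

end PercWords
end

section
/- Let d ≥ 1 and p ∈ (0, 1/2]. For every infinite word ξ ∈ Ξ, the ℙ_p-probability that ξ is seen from the origin is at least θ(p), the ℙ_p-probability that the origin lies in an infinite connected set of 1-vertices. -/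
open MeasureTheory Set

namespace PercWords

/-- The word `ξ` is seen from `v` along an infinite self-avoiding path all of whose
vertices lie in `A`. -/
def seesWordIn {d : ℕ} (ω : Config d) (ξ : ℕ → Bool) (A : Set (Vtx d)) (v : Vtx d) : Prop :=
  ∃ γ : ℕ → Vtx d, γ 0 = v ∧ Function.Injective γ ∧
    (∀ i, adj (γ i) (γ (i + 1))) ∧ (∀ i, γ i ∈ A) ∧ (∀ i, ω (γ i) = ξ i)

/-- The word `ξ` is seen from `v` in the configuration `ω`. -/
def seesWord {d : ℕ} (ω : Config d) (ξ : ℕ → Bool) (v : Vtx d) : Prop :=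
  seesWordIn ω ξ Set.univ v

/-- `v` lies in an infinite connected set of `1`-vertices of `ω`. -/
def PercolatesAt {d : ℕ} (ω : Config d) (v : Vtx d) : Prop :=
  ∃ C : Set (Vtx d), v ∈ C ∧ C.Infinite ∧ (∀ u ∈ C, ω u = true) ∧
    ∀ u₁ ∈ C, ∀ u₂ ∈ C, ∃ n : ℕ, ∃ γ : ℕ → Vtx d,
      γ 0 = u₁ ∧ γ n = u₂ ∧ (∀ i < n, adj (γ i) (γ (i + 1))) ∧ (∀ i ≤ n, γ i ∈ C)

/-- The critical point of Bernoulli site percolation on `ℤ^d`, relative to a family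
`ℙ p` of Bernoulli site percolation measures: the infimum of the set of parameters
for which the origin lies in an infinite connected set of `1`-vertices with positive
probability. -/
noncomputable def pcSite (d : ℕ) (ℙ : ℝ → Measure (Config d)) : ℝ :=
  sInf {p : ℝ | p ∈ Set.Icc (0 : ℝ) 1 ∧ 0 < ℙ p {ω | PercolatesAt ω (fun _ => 0)}}



/-- Ones-walk in `S` from `v` to `T`. -/
inductive PathO {d : ℕ} (ω : Config d) (T : Set (Vtx d)) (S : Finset (Vtx d)) : Vtx d → Prop
  | target (v : Vtx d) (hv : v ∈ S) (h1 : ω v = true) (hT : v ∈ T) : PathO ω T S v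
  | step (v u : Vtx d) (hv : v ∈ S) (h1 : ω v = true) (ha : adj v u) (h : PathO ω T S u) :
      PathO ω T S v

/-- Self-avoiding path in `S` from `v` to `T` seeing `ξ` from index `m`. -/
inductive PathW {d : ℕ} (ω : Config d) (ξ : ℕ → Bool) (T : Set (Vtx d)) :
    Finset (Vtx d) → Vtx d → ℕ → Prop
  | target (S : Finset (Vtx d)) (v : Vtx d) (m : ℕ) (hv : v ∈ S) (h1 : ω v = ξ m) (hT : v ∈ T) :
      PathW ω ξ T S v m
  | step (S : Finset (Vtx d)) (v u : Vtx d) (m : ℕ) (hv : v ∈ S) (h1 : ω v = ξ m) (ha : adj v u)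
      (h : PathW ω ξ T (S.erase v) u (m + 1)) : PathW ω ξ T S v m

lemma PathO.dep {d : ℕ} {ω ω' : Config d} {T S} (h : ∀ v ∈ S, ω v = ω' v) {v : Vtx d}
    (hp : PathO ω T S v) : PathO ω' T S v := by
  induction hp with
  | target v hv h1 hT => exact .target v hv (h v hv ▸ h1) hT
  | step v u hv h1 ha _ ih => exact .step v u hv (h v hv ▸ h1) ha ih

lemma PathO.mono {d : ℕ} {ω : Config d} {T S S'} (h : S ⊆ S') {v : Vtx d}
    (hp : PathO ω T S v) : PathO ω T S' v := by
  induction hp with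
  | target v hv h1 hT => exact .target v (h hv) h1 hT
  | step v u hv h1 ha _ ih => exact .step v u (h hv) h1 ha ih

lemma PathO.erase_false {d : ℕ} {ω : Config d} {T S} {x : Vtx d} (h : ω x = false) {v : Vtx d}
    (hp : PathO ω T S v) : PathO ω T (S.erase x) v := by
  induction hp with
  | target v hv h1 hT => exact .target v (by grind) h1 hT
  | step v u hv h1 ha _ ih => exact .step v u (by grind) h1 ha ih

lemma PathO.erase_true {d : ℕ} {ω : Config d} {T S} (x : Vtx d) {v : Vtx d}
    (hp : PathO ω T S v) :
    x ∈ T ∨ PathO ω T (S.erase x) v ∨ ∃ w, adj x w ∧ PathO ω T (S.erase x) w := by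
  induction hp with
  | target v hv h1 hT =>
    by_cases hx : v = x
    · left; exact hx ▸ hT
    · right; left; exact .target v (by grind) h1 hT
  | step v u hv h1 ha _ ih =>
    rcases ih with ih | ih | ih
    · exact .inl ih
    · by_cases hx : v = x
      · right; right; exact ⟨u, hx ▸ ha, ih⟩
      · right; left; exact .step v u (by grind) h1 ha ih
    · exact .inr (.inr ih)

lemma PathW.dep {d : ℕ} {ω ω' : Config d} {ξ T S} {v : Vtx d} {m : ℕ}
    (hp : PathW ω ξ T S v m) (h : ∀ v ∈ S, ω v = ω' v) : PathW ω' ξ T S v m := by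
  induction hp with
  | target S v m hv h1 hT => exact .target S v m hv (h v hv ▸ h1) hT
  | step S v u m hv h1 ha _ ih =>
    exact .step S v u m hv (h v hv ▸ h1) ha (ih fun w hw => h w (Finset.mem_of_mem_erase hw))

lemma PathW.mono {d : ℕ} {ω : Config d} {ξ T S} {v : Vtx d} {m : ℕ}
    (hp : PathW ω ξ T S v m) : ∀ {S'}, S ⊆ S' → PathW ω ξ T S' v m := by
  induction hp with
  | target S v m hv h1 hT => intro S' h; exact .target S' v m (h hv) h1 hT
  | step S v u m hv h1 ha _ ih =>
    intro S' h
    exact .step S' v u m (h hv) h1 ha (ih (Finset.erase_subset_erase v h))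

lemma PathW.extract {d : ℕ} {ω : Config d} {ξ T S} {v : Vtx d} {m : ℕ}
    (hp : PathW ω ξ T S v m) : ∃ (k : ℕ) (γ : ℕ → Vtx d), γ 0 = v ∧
      (∀ i < k, adj (γ i) (γ (i + 1))) ∧ (∀ i ≤ k, ∀ j ≤ k, γ i = γ j → i = j) ∧
      (∀ i ≤ k, γ i ∈ S) ∧ (∀ i ≤ k, ω (γ i) = ξ (m + i)) ∧ γ k ∈ T := by
  induction hp with
  | target S v m hv h1 hT =>
    refine ⟨0, fun _ => v, rfl, by simp, by simp, by simpa using hv, by simpa using h1, hT⟩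
  | step S v u m hv h1 ha _ ih =>
    obtain ⟨k, γ, h0, hadj, hinj, hS, hω, hT⟩ := ih
    refine ⟨k + 1, fun i => Nat.casesOn i v γ, rfl, ?_, ?_, ?_, ?_, hT⟩
    · rintro (_ | i) hi
      · simpa [h0] using ha
      · exact hadj i (by omega)
    · rintro (_ | i) hi (_ | j) hj h
      · rfl
      · have := hS j (by omega)
        simp only at h
        rw [← h] at this
        simp at this
      · have := hS i (by omega)
        simp only at h
        rw [h] at this
        simp at this
      · rw [hinj i (by omega) j (by omega) h]
    · rintro (_ | i) hi
      · exact hv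
      · exact Finset.mem_of_mem_erase (hS i (by omega))
    · rintro (_ | i) hi
      · exact h1
      · have := hω i (by omega)
        simp only [this]
        congr 1; omega

/-- Event depends only on the coordinates in `s`. -/
def Dep {ι : Type} (s : Finset ι) (E : Set (ι → Bool)) : Prop :=
  ∀ ω ω' : ι → Bool, (∀ v ∈ s, ω v = ω' v) → ω ∈ E → ω' ∈ E

/-- Cylinder. -/
def cyl {ι : Type} (s : Finset ι) (f : ι → Bool) : Set (ι → Bool) := {ω | ∀ v ∈ s, ω v = f v}

lemma cyl_meas {ι : Type} (s : Finset ι) (f : ι → Bool) : MeasurableSet (cyl s f) := by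
  have : cyl s f = ⋂ v ∈ s, (fun ω : ι → Bool => ω v) ⁻¹' {f v} := by
    ext ω; simp [cyl]
  rw [this]
  exact Finset.measurableSet_biInter _ fun v _ => measurable_pi_apply v (measurableSet_singleton _)

open Classical in
lemma Dep.eq {ι : Type} {s : Finset ι} {E : Set (ι → Bool)} (h : Dep s E) :
    E = ⋃ t ∈ s.powerset.filter (fun t => (fun v => decide (v ∈ t)) ∈ E),
      cyl s (fun v => decide (v ∈ t)) := by
  ext ω
  simp only [Finset.mem_filter, Finset.mem_powerset, mem_iUnion, exists_prop]
  constructor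
  · intro hω
    refine ⟨s.filter (fun v => ω v = true), ⟨Finset.filter_subset _ _, ?_⟩, ?_⟩
    · refine h ω _ ?_ hω
      intro v hv
      simp [hv]
    · intro v hv
      simp [hv]
  · rintro ⟨t, ⟨_, ht⟩, hω⟩
    exact h _ ω (fun v hv => (hω v hv).symm) ht

open Classical in
lemma cyl_disj {ι : Type} (s : Finset ι) (A : Finset (Finset ι)) (hA : ∀ t ∈ A, t ⊆ s) :
    (A : Set (Finset ι)).PairwiseDisjoint (fun t => cyl s (fun v => decide (v ∈ t))) := by
  intro t ht t' ht' hne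
  refine Set.disjoint_left.2 fun ω h1 h2 => hne ?_
  ext v
  by_cases hv : v ∈ s
  · have := (h1 v hv).symm.trans (h2 v hv)
    simpa using this
  · exact ⟨fun h => absurd (hA t ht h) hv, fun h => absurd (hA t' ht' h) hv⟩

lemma Dep.meas {ι : Type} {s : Finset ι} {E : Set (ι → Bool)} (h : Dep s E) :
    MeasurableSet E := by
  classical
  rw [h.eq]
  exact Finset.measurableSet_biUnion _ fun _ _ => cyl_meas _ _

/-- Weight of a state. -/
noncomputable def wt (p : ℝ) (b : Bool) : ENNReal := ENNReal.ofReal (if b then p else 1 - p)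

lemma Dep.indep {ι : Type} {p : ℝ} {μ : Measure (ι → Bool)} (hμ : IsBernoulliFam p μ)
    {s : Finset ι} {E : Set (ι → Bool)} (h : Dep s E) {x : ι} (hx : x ∉ s) (b : Bool) :
    μ (E ∩ {ω | ω x = b}) = wt p b * μ E := by
  classical
  have hm : MeasurableSet {ω : ι → Bool | ω x = b} :=
    measurableSet_eq_fun (measurable_pi_apply (X := fun _ : ι => Bool) x) measurable_const
  set A := s.powerset.filter (fun t => (fun v => decide (v ∈ t)) ∈ E) with hAdef
  have hA : ∀ t ∈ A, t ⊆ s := fun t ht => by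
    simp only [hAdef, Finset.mem_filter, Finset.mem_powerset] at ht; exact ht.1
  have hE : E = ⋃ t ∈ A, cyl s (fun v => decide (v ∈ t)) := h.eq
  have hd := cyl_disj s A hA
  rw [hE, Set.iUnion₂_inter, measure_biUnion_finset hd (fun _ _ => cyl_meas _ _),
    measure_biUnion_finset (hd.mono fun t => Set.inter_subset_left)
      (fun _ _ => (cyl_meas _ _).inter hm), Finset.mul_sum]
  refine Finset.sum_congr rfl fun t ht => ?_
  have h1 : cyl s (fun v => decide (v ∈ t)) ∩ {ω | ω x = b} =
      {ω | ∀ v ∈ insert x s, ω v = Function.update (fun v => decide (v ∈ t)) x b v} := by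
    ext ω
    simp only [cyl, mem_inter_iff, mem_setOf_eq, Finset.forall_mem_insert, Function.update_self]
    rw [and_comm]
    refine and_congr Iff.rfl (forall₂_congr fun v hv => ?_)
    rw [Function.update_of_ne (by rintro rfl; exact hx hv)]
  rw [h1, hμ.2, Finset.prod_insert hx, cyl, hμ.2, Function.update_self]
  congr 1
  refine Finset.prod_congr rfl fun v hv => ?_
  rw [Function.update_of_ne (by rintro rfl; exact hx hv)]

lemma split {ι : Type} (μ : Measure (ι → Bool)) (E : Set (ι → Bool)) (x : ι) (b : Bool) :
    μ E = μ (E ∩ {ω | ω x = b}) + μ (E ∩ {ω | ω x = !b}) := by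
  have hm : MeasurableSet {ω : ι → Bool | ω x = b} :=
    measurableSet_eq_fun (measurable_pi_apply (X := fun _ : ι => Bool) x) measurable_const
  rw [← measure_inter_add_diff E hm]
  congr 2
  ext ω
  cases b <;> cases h : ω x <;> simp [h]

lemma wt_ineq {p : ℝ} (hp0 : 0 < p) (hp : p ≤ 1 / 2) (b : Bool) {x y x' y' : ENNReal}
    (hx : x ≤ x') (hy : y ≤ y') (hyx : y ≤ x) :
    wt p true * x + wt p false * y ≤ wt p b * x' + wt p (!b) * y' := by
  refine le_trans ?_ (add_le_add (mul_le_mul_right hx _) (mul_le_mul_right hy _))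
  cases b
  · have : wt p false = wt p true + ENNReal.ofReal (1 - 2 * p) := by
      simp only [wt]
      rw [← ENNReal.ofReal_add (by simp; linarith) (by linarith)]
      congr 1; simp; ring
    simp only [Bool.not_false]
    rw [this, add_mul, add_mul, add_assoc, add_comm (ENNReal.ofReal (1 - 2 * p) * x)]
    gcongr
  · exact le_rfl

/-- Ones event. -/
def EvO {d : ℕ} (T : Set (Vtx d)) (S : Finset (Vtx d)) (F : Set (Vtx d × ℕ)) : Set (Config d) :=
  {ω | ∃ x ∈ F, PathO ω T S x.1}

/-- Word event. -/
def EvW {d : ℕ} (ξ : ℕ → Bool) (T : Set (Vtx d)) (S : Finset (Vtx d)) (F : Set (Vtx d × ℕ)) :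
    Set (Config d) :=
  {ω | ∃ x ∈ F, PathW ω ξ T S x.1 x.2}

lemma EvO.dep {d : ℕ} (T : Set (Vtx d)) (S F) : Dep S (EvO T S F) := by
  rintro ω ω' h ⟨x, hx, hp⟩
  exact ⟨x, hx, hp.dep h⟩

lemma EvW.dep {d : ℕ} (ξ) (T : Set (Vtx d)) (S F) : Dep S (EvW ξ T S F) := by
  rintro ω ω' h ⟨x, hx, hp⟩
  exact ⟨x, hx, hp.dep h⟩

lemma Dep.or {ι : Type} {s : Finset ι} {E : Set (ι → Bool)} (h : Dep s E) (q : Prop) :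
    Dep s {ω | q ∨ ω ∈ E} := by
  rintro ω ω' hh (h1 | h1)
  · exact .inl h1
  · exact .inr (h ω ω' hh h1)

lemma main_ind {d : ℕ} {p : ℝ} (hp0 : 0 < p) (hp : p ≤ 1 / 2)
    {μ : Measure (Config d)} (hμ : IsBernoulliFam p μ) (ξ : ℕ → Bool) (T : Set (Vtx d)) (n : ℕ) :
    ∀ (S : Finset (Vtx d)) (F : Set (Vtx d × ℕ)), S.card = n →
      μ (EvO T S F) ≤ μ (EvW ξ T S F) := by
  induction n with
  | zero =>
    intro S F hS
    have : EvO T S F = ∅ := by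
      ext ω
      simp only [mem_empty_iff_false, iff_false]
      rintro ⟨x, hx, hp⟩
      rw [Finset.card_eq_zero] at hS
      subst hS
      cases hp <;> simp_all
    simp [this]
  | succ n ih =>
    intro S F hS
    by_cases hF : ∃ x ∈ F, x.1 ∈ S
    · obtain ⟨⟨v, m⟩, hxF, hvS⟩ := hF
      simp only at hvS
      set S' := S.erase v with hS'
      have hc : S'.card = n := by rw [hS', Finset.card_erase_of_mem hvS, hS]; rfl
      have hv' : v ∉ S' := Finset.notMem_erase _ _
      set F' : Set (Vtx d × ℕ) := F ∪ {x | adj v x.1 ∧ x.2 = m + 1} with hF'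
      have hFF : F ⊆ F' := subset_union_left
      set O1 : Set (Config d) := {ω | v ∈ T ∨ ω ∈ EvO T S' F'} with hO1
      set W1 : Set (Config d) := {ω | v ∈ T ∨ ω ∈ EvW ξ T S' F'} with hW1
      have h1 : μ O1 ≤ μ W1 := by
        by_cases hT : v ∈ T
        · simp [hO1, hW1, hT]
        · simpa [hO1, hW1, hT] using ih S' F' hc
      have h0 : μ (EvO T S' F) ≤ μ (EvW ξ T S' F) := ih S' F hc
      have h01 : μ (EvO T S' F) ≤ μ O1 :=
        measure_mono fun ω ⟨x, hx, hh⟩ => .inr ⟨x, hFF hx, hh⟩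
      calc μ (EvO T S F)
          = μ (EvO T S F ∩ {ω | ω v = true}) + μ (EvO T S F ∩ {ω | ω v = !true}) := split _ _ _ _
        _ ≤ μ (O1 ∩ {ω | ω v = true}) + μ (EvO T S' F ∩ {ω | ω v = !true}) := by
          refine add_le_add (measure_mono ?_) (measure_mono ?_)
          · rintro ω ⟨⟨x, hx, hh⟩, hω⟩
            refine ⟨?_, hω⟩
            rcases hh.erase_true v with hh | hh | ⟨w, hw, hh⟩
            · exact .inl hh
            · exact .inr ⟨x, hFF hx, hh⟩
            · exact .inr ⟨(w, m + 1), .inr ⟨hw, rfl⟩, hh⟩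
          · rintro ω ⟨⟨x, hx, hh⟩, hω⟩
            exact ⟨⟨x, hx, hh.erase_false hω⟩, hω⟩
        _ = wt p true * μ O1 + wt p (!true) * μ (EvO T S' F) := by
          rw [((EvO.dep T S' F').or _).indep hμ hv', (EvO.dep T S' F).indep hμ hv']
        _ ≤ wt p (ξ m) * μ W1 + wt p (!(ξ m)) * μ (EvW ξ T S' F) :=
          wt_ineq hp0 hp (ξ m) h1 h0 h01
        _ = μ (W1 ∩ {ω | ω v = ξ m}) + μ (EvW ξ T S' F ∩ {ω | ω v = !(ξ m)}) := by
          rw [((EvW.dep ξ T S' F').or _).indep hμ hv', (EvW.dep ξ T S' F).indep hμ hv']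
        _ ≤ μ (EvW ξ T S F ∩ {ω | ω v = ξ m}) + μ (EvW ξ T S F ∩ {ω | ω v = !(ξ m)}) := by
          refine add_le_add (measure_mono ?_) (measure_mono ?_)
          · rintro ω ⟨hh, hω⟩
            refine ⟨?_, hω⟩
            rcases hh with hT | ⟨⟨w, k⟩, hx | ⟨hx, hk⟩, hh⟩
            · exact ⟨(v, m), hxF, .target _ _ _ hvS hω hT⟩
            · exact ⟨(w, k), hx, hh.mono (Finset.erase_subset _ _)⟩
            · simp only at hx hk hh
              subst hk
              exact ⟨(v, m), hxF, .step _ _ w _ hvS hω hx hh⟩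
          · rintro ω ⟨⟨x, hx, hh⟩, hω⟩
            exact ⟨⟨x, hx, hh.mono (Finset.erase_subset _ _)⟩, hω⟩
        _ = μ (EvW ξ T S F) := (split _ _ _ _).symm
    · have : EvO T S F = ∅ := by
        ext ω
        simp only [mem_empty_iff_false, iff_false]
        rintro ⟨x, hx, hp⟩
        exact hF ⟨x, hx, by cases hp <;> assumption⟩
      simp [this]

/-- Box. -/
noncomputable def box (d n : ℕ) : Finset (Vtx d) := Finset.Icc (fun _ => -(n : ℤ)) (fun _ => (n : ℤ))

lemma mem_box {d n : ℕ} {v : Vtx d} : v ∈ box d n ↔ ∀ i, -(n : ℤ) ≤ v i ∧ v i ≤ n := by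
  simp [box, Pi.le_def, forall_and]

lemma box_mono {d m n : ℕ} (h : m ≤ n) : box d m ⊆ box d n := by
  intro v hv
  rw [mem_box] at *
  intro i
  have := hv i
  omega

lemma box_adj {d n : ℕ} {v w : Vtx d} (hv : v ∈ box d n) (h : adj v w) : w ∈ box d (n + 1) := by
  rw [mem_box] at *
  intro i
  have h1 := hv i
  have h2 : (v i - w i) ^ 2 ≤ 1 := by
    unfold adj at h
    rw [← h]
    exact Finset.single_le_sum (f := fun i => (v i - w i) ^ 2) (fun j _ => sq_nonneg _)
      (Finset.mem_univ i)
  have h3 := abs_le.1 (sq_le_one_iff_abs_le_one _ |>.1 h2)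
  push_cast
  omega

/-- Outlet vertices of the box. -/
def outT (d n : ℕ) : Set (Vtx d) := {v | ∃ w, adj v w ∧ w ∉ box d n}

lemma perc_path {d : ℕ} {ω : Config d} {S : Finset (Vtx d)} (n : ℕ) : ∀ (γ : ℕ → Vtx d),
    γ 0 ∈ S → γ n ∉ S → (∀ i < n, adj (γ i) (γ (i + 1))) → (∀ i ≤ n, ω (γ i) = true) →
    PathO ω {v | ∃ w, adj v w ∧ w ∉ S} S (γ 0) := by
  induction n with
  | zero => intro γ h0 h1; exact absurd h0 h1
  | succ n ih =>
    intro γ h0 h1 ha ho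
    by_cases h : γ 1 ∈ S
    · exact .step _ (γ 1) h0 (ho 0 (by omega)) (ha 0 (by omega))
        (ih (fun i => γ (i + 1)) h h1 (fun i hi => ha (i + 1) (by omega))
          (fun i hi => ho (i + 1) (by omega)))
    · exact .target _ h0 (ho 0 (by omega)) ⟨γ 1, ha 0 (by omega), h⟩

/-- Paths seeing the first letters of the word. -/
def good {d : ℕ} (ξ : ℕ → Bool) (n : ℕ) (ω : Config d) : Set (ℕ → Vtx d) :=
  {γ | γ 0 = (fun _ => 0) ∧ (∀ i, γ i ∈ box d i) ∧ (∀ i < n, adj (γ i) (γ (i + 1))) ∧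
    (∀ i ≤ n, ∀ j ≤ n, γ i = γ j → i = j) ∧ ∀ i ≤ n, ω (γ i) = ξ i}

lemma good_anti {d : ℕ} (ξ : ℕ → Bool) {m n : ℕ} (h : m ≤ n) (ω : Config d) :
    good ξ n ω ⊆ good ξ m ω := by
  rintro γ ⟨h0, h1, h2, h3, h4⟩
  exact ⟨h0, h1, fun i hi => h2 i (by omega), fun i hi j hj => h3 i (by omega) j (by omega),
    fun i hi => h4 i (by omega)⟩

lemma W_good {d : ℕ} (ξ : ℕ → Bool) (n : ℕ) (ω : Config d)
    (h : ω ∈ EvW ξ (outT d n) (box d n) {((fun _ => 0), 0)}) : (good ξ n ω).Nonempty := by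
  obtain ⟨x, hx, hh⟩ := h
  rw [mem_singleton_iff] at hx
  subst hx
  obtain ⟨k, γ, h0, hadj, hinj, hS, hω, w, hw, hwn⟩ := hh.extract
  simp only at h0
  have hbox : ∀ i ≤ k, γ i ∈ box d i := by
    intro i
    induction i with
    | zero => intro _; rw [h0, mem_box]; simp
    | succ i ih => intro hi; exact box_adj (ih (by omega)) (hadj i (by omega))
  have hk : n ≤ k := by
    by_contra hlt
    exact hwn (box_mono (by omega) (box_adj (hbox k le_rfl) hw))
  refine ⟨fun i => γ (min i n), by simpa using h0, ?_, ?_, ?_, ?_⟩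
  · intro i
    exact box_mono (min_le_left _ _) (hbox _ (by omega))
  · intro i hi
    have e1 : min i n = i := by omega
    have e2 : min (i + 1) n = i + 1 := by omega
    simp only [e1, e2]
    exact hadj i (by omega)
  · intro i hi j hj h
    have := hinj _ (by omega) _ (by omega) h
    omega
  · intro i hi
    have e1 : min i n = i := by omega
    simp only [e1]
    simpa using hω i (by omega)

lemma good_dep {d : ℕ} (ξ : ℕ → Bool) (n : ℕ) :
    Dep (box d n) {ω : Config d | (good ξ n ω).Nonempty} := by
  rintro ω ω' h ⟨γ, h0, h1, h2, h3, h4⟩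
  exact ⟨γ, h0, h1, h2, h3, fun i hi => by rw [← h _ (box_mono hi (h1 i))]; exact h4 i hi⟩

lemma good_closed {d : ℕ} (ξ : ℕ → Bool) (n : ℕ) (ω : Config d) : IsClosed (good ξ n ω) := by
  have c1 : ∀ (i : ℕ) (P : Vtx d → Prop), IsClosed {γ : ℕ → Vtx d | P (γ i)} := fun i P =>
    (isClosed_discrete {x | P x}).preimage (continuous_apply i)
  have c2 : ∀ (i j : ℕ) (P : Vtx d → Vtx d → Prop), IsClosed {γ : ℕ → Vtx d | P (γ i) (γ j)} :=
    fun i j P => by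
      have hcont : Continuous (fun γ : ℕ → Vtx d => (γ i, γ j)) :=
        (continuous_apply i).prodMk (continuous_apply j)
      exact (isClosed_discrete {x : Vtx d × Vtx d | P x.1 x.2}).preimage hcont
  unfold good
  simp only [Set.ofPred_and, Set.ofPred_forall]
  refine (c1 0 (fun x => x = fun _ => 0)).inter (.inter ?_ (.inter ?_ (.inter ?_ ?_)))
  · exact isClosed_iInter fun i => c1 i (fun x => x ∈ box d i)
  · exact isClosed_iInter fun i => isClosed_iInter fun _ => c2 i (i + 1) (fun x y => adj x y)
  · exact isClosed_iInter fun i => isClosed_iInter fun _ => isClosed_iInter fun j =>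
      isClosed_iInter fun _ => c2 i j (fun x y => x = y → i = j)
  · exact isClosed_iInter fun i => isClosed_iInter fun _ => c1 i (fun x => ω x = ξ i)

lemma good_sees {d : ℕ} (ξ : ℕ → Bool) (ω : Config d) (h : ∀ n, (good ξ n ω).Nonempty) :
    seesWord ω ξ (fun _ => 0) := by
  have hc : IsCompact (good ξ 0 ω) := by
    refine IsCompact.of_isClosed_subset
      (isCompact_univ_pi (s := fun i => ((box d i : Finset (Vtx d)) : Set (Vtx d)))
        fun i => (Finset.finite_toSet _).isCompact) (good_closed ξ 0 ω) ?_
    rintro γ ⟨_, h1, _⟩ i _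
    exact h1 i
  obtain ⟨γ, hγ⟩ := IsCompact.nonempty_iInter_of_sequence_nonempty_isCompact_isClosed
    (fun n => good ξ n ω) (fun n => good_anti ξ (Nat.le_succ n) ω) h hc
    (fun n => good_closed ξ n ω)
  rw [mem_iInter] at hγ
  refine ⟨γ, (hγ 0).1, ?_, fun i => (hγ (i + 1)).2.2.1 i (by omega), fun _ => mem_univ _,
    fun i => (hγ i).2.2.2.2 i le_rfl⟩
  intro i j hij
  exact (hγ (max i j)).2.2.2.1 i (le_max_left _ _) j (le_max_right _ _) hij

/-- **Wierman's bound** : for `d ≥ 1` and `p ∈ (0, 1/2]`, for every infinite word `ξ`,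
the probability that `ξ` is seen from the origin is at least `θ(p)`, the probability
that the origin lies in an infinite connected set of `1`-vertices. -/
theorem wierman_word_bound
    (d : ℕ) (hd : 1 ≤ d) (p : ℝ) (hp0 : 0 < p) (hp : p ≤ 1 / 2)
    (μ : Measure (Config d)) (hμ : IsBernoulliFam p μ) (ξ : ℕ → Bool) :
    μ {ω | PercolatesAt ω (fun _ => 0)} ≤ μ {ω | seesWord ω ξ (fun _ => 0)} := by
  have := hμ.1
  have key : ∀ n, μ {ω | PercolatesAt ω (fun _ => 0)} ≤
      μ {ω : Config d | (good ξ n ω).Nonempty} := by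
    intro n
    calc μ {ω | PercolatesAt ω (fun _ => 0)}
        ≤ μ (EvO (outT d n) (box d n) {((fun _ => 0), 0)}) := by
          refine measure_mono ?_
          rintro ω ⟨C, h0, hinf, hone, hconn⟩
          obtain ⟨w, hwC, hw⟩ := hinf.exists_notMem_finset (box d n)
          obtain ⟨k, γ, hγ0, hγk, ha, hC⟩ := hconn _ h0 w hwC
          refine ⟨((fun _ => 0), 0), rfl, ?_⟩
          have := perc_path (ω := ω) (S := box d n) k γ (by rw [hγ0, mem_box]; simp)
            (by rw [hγk]; exact hw) ha (fun i hi => hone _ (hC i hi))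
          rw [hγ0] at this
          exact this
      _ ≤ μ (EvW ξ (outT d n) (box d n) {((fun _ => 0), 0)}) :=
          main_ind hp0 hp hμ ξ _ _ _ _ rfl
      _ ≤ _ := measure_mono fun ω h => W_good ξ n ω h
  calc μ {ω | PercolatesAt ω (fun _ => 0)}
      ≤ ⨅ n, μ {ω : Config d | (good ξ n ω).Nonempty} := le_iInf key
    _ = μ (⋂ n, {ω : Config d | (good ξ n ω).Nonempty}) := by
        refine (Antitone.measure_iInter ?_ ?_ ⟨0, measure_ne_top _ _⟩).symm
        · intro m n h ω hω
          exact hω.mono (good_anti ξ h ω)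
        · exact fun n => (good_dep ξ n).meas.nullMeasurableSet
    _ ≤ _ := measure_mono fun ω h => good_sees ξ ω (by simpa using h)

end PercWords
end

section
/- Let d ≥ 3, p ∈ (p_c^site(ℤ^d), 1 − p_c^site(ℤ^d)), and q ∈ (0,1). Let μ_q = ((1−q)δ₀ + qδ₁)^{⊗ℕ} be the product measure on Ξ = {0,1}^ℕ. Then ℙ_p-almost surely, μ_q-almost every word ξ ∈ Ξ is seen from some vertex of ℤ^d: ℙ_p(μ_q(S_∞) = 1) = 1. -/
open MeasureTheory Set

namespace PercWords

section helpers

/-- one-site Bernoulli law -/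
noncomputable def bern (p : ℝ) : Measure Bool :=
  ENNReal.ofReal p • Measure.dirac true + ENNReal.ofReal (1 - p) • Measure.dirac false

lemma bern_singleton (p : ℝ) (b : Bool) :
    bern p {b} = ENNReal.ofReal (if b then p else 1 - p) := by
  cases b <;> simp [bern]

lemma bern_prob {p : ℝ} (h0 : 0 ≤ p) (h1 : p ≤ 1) : IsProbabilityMeasure (bern p) := by
  constructor
  simp only [bern, Measure.add_apply, Measure.smul_apply, measure_univ, smul_eq_mul, mul_one]
  rw [← ENNReal.ofReal_add h0 (by linarith)]
  simp

lemma eq_infinitePi_bern {ι : Type} {p : ℝ} (h0 : 0 ≤ p) (h1 : p ≤ 1) {μ : Measure (ι → Bool)}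
    (h : IsBernoulliFam p μ) : μ = Measure.infinitePi (fun _ : ι => bern p) := by
  classical
  have := bern_prob h0 h1
  refine IsProjectiveLimit.unique ?_ (Measure.isProjectiveLimit_infinitePi _)
  intro I
  refine Measure.ext_of_singleton fun g => ?_
  rw [Measure.map_apply (Finset.measurable_restrict I) (measurableSet_singleton g),
    Measure.pi_singleton]
  have := h.2 I (fun v => if hv : v ∈ I then g ⟨v, hv⟩ else true)
  have e : (I.restrict ⁻¹' {g} : Set (ι → Bool)) =
      {ω | ∀ v ∈ I, ω v = (fun v => if hv : v ∈ I then g ⟨v, hv⟩ else true) v} := by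
    ext ω
    simp only [mem_preimage, mem_singleton_iff, mem_ofPred_eq, funext_iff, Subtype.forall]
    refine forall_congr' fun a => forall_congr' fun ha => ?_
    simp [ha]
  rw [e, this, ← Finset.prod_coe_sort]
  refine Finset.prod_congr rfl fun i _ => ?_
  rw [bern_singleton]
  simp

/-- `E` depends only on the coordinates in `F`. -/
def DepOn {ι : Type} (F : Finset ι) (E : Set (ι → Bool)) : Prop :=
  ∀ ω ω' : ι → Bool, (∀ v ∈ F, ω v = ω' v) → ω ∈ E → ω' ∈ E

lemma DepOn.eq_preimage {ι : Type} {F : Finset ι} {E : Set (ι → Bool)} (h : DepOn F E) :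
    E = (fun ω (i : F) => ω i) ⁻¹' ((fun ω (i : F) => ω i) '' E) := by
  ext ω
  constructor
  · intro hω; exact ⟨ω, hω, rfl⟩
  · rintro ⟨ω', h', e⟩
    refine h ω' ω (fun v hv => ?_) h'
    exact congrFun e ⟨v, hv⟩

lemma DepOn.measurableSet {ι : Type} {F : Finset ι} {E : Set (ι → Bool)} (h : DepOn F E) :
    MeasurableSet E := by
  rw [h.eq_preimage]
  refine measurableSet_preimage (by fun_prop) ?_
  exact (Set.toFinite _).measurableSet

lemma indep_dep {ι : Type} {p : ℝ} (h0 : 0 ≤ p) (h1 : p ≤ 1) {μ : Measure (ι → Bool)}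
    (h : IsBernoulliFam p μ) {F G : Finset ι} (hFG : Disjoint F G) {E H : Set (ι → Bool)}
    (hE : DepOn F E) (hH : DepOn G H) : μ (E ∩ H) = μ E * μ H := by
  have := bern_prob h0 h1
  have hi : ProbabilityTheory.iIndepFun (fun (i : ι) (ω : ι → Bool) => ω i) μ := by
    rw [eq_infinitePi_bern h0 h1 h]
    exact ProbabilityTheory.iIndepFun_infinitePi (X := fun _ x => x) (by fun_prop)
  have h2 := hi.indepFun_finset F G hFG (by fun_prop)
  rw [hE.eq_preimage, hH.eq_preimage]
  exact h2.measure_inter_preimage_eq_mul _ _ (Set.toFinite _).measurableSet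
    (Set.toFinite _).measurableSet

lemma site_prob {ι : Type} {p : ℝ} {μ : Measure (ι → Bool)}
    (h : IsBernoulliFam p μ) (u : ι) (b : Bool) :
    μ {ω | ω u = b} = ENNReal.ofReal (if b then p else 1 - p) := by
  have := h.2 {u} (fun _ => b)
  simpa using this

lemma site_dep {ι : Type} (u : ι) (b : Bool) : DepOn {u} {ω : ι → Bool | ω u = b} := by
  intro ω ω' h hω
  simp only [mem_ofPred_eq] at *
  rw [← hω, h u (by simp)]

lemma site_indep {ι : Type} {p : ℝ} (h0 : 0 ≤ p) (h1 : p ≤ 1) {μ : Measure (ι → Bool)}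
    (h : IsBernoulliFam p μ) {F : Finset ι} {u : ι} (hu : u ∉ F) (b : Bool) {E : Set (ι → Bool)}
    (hE : DepOn F E) : μ.real ({ω | ω u = b} ∩ E) = (if b then p else 1 - p) * μ.real E := by
  rw [measureReal_def, indep_dep h0 h1 h (Finset.disjoint_singleton_left.2 hu) (site_dep u b) hE,
    ENNReal.toReal_mul, site_prob h, ENNReal.toReal_ofReal, measureReal_def]
  split_ifs <;> linarith

lemma zero_one {d : ℕ} (hd : 0 < d) {p : ℝ} (h0 : 0 ≤ p) (h1 : p ≤ 1) {μ : Measure (Config d)}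
    (h : IsBernoulliFam p μ) {A : Set (Config d)} (hA : MeasurableSet A)
    (hinv : ∀ x : Vtx d, (fun (ω : Config d) v => ω (v + x)) ⁻¹' A = A) (hpos : 0 < μ A) :
    μ A = 1 := by
  classical
  have := h.1
  have := bern_prob h0 h1
  have key : ∀ ε : ℝ, 0 < ε → μ.real A ≤ (μ.real A + ε) ^ 2 + 2 * ε := by
    intro ε hε
    obtain ⟨C, hC, hCA⟩ := exists_measure_symmDiff_lt_of_generateFrom_isSetRing (μ := μ)
      (C := measurableCylinders (fun _ : Vtx d => Bool)) isSetRing_measurableCylinders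
      ⟨{univ}, by simp, by simpa using univ_mem_measurableCylinders (fun _ : Vtx d => Bool), by simp⟩
      generateFrom_measurableCylinders.symm hA (ENNReal.ofReal_pos.2 hε)
    obtain ⟨s, S, hS, rfl⟩ := (mem_measurableCylinders _).1 hC
    have hdep : DepOn s (cylinder s S) := by
      intro ω ω' hh hω
      simp only [mem_cylinder] at *
      convert hω using 1
      ext i
      exact (hh i i.2).symm
    -- choose shift
    obtain ⟨x, hx⟩ : ∃ x : Vtx d, Disjoint s (s.image (fun v => v + x)) := by
      obtain ⟨M, hM⟩ : ∃ M : ℤ, ∀ v ∈ s, ∀ w ∈ s, v ⟨0, hd⟩ - w ⟨0, hd⟩ < M := by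
        obtain ⟨M, hM⟩ := ((s ×ˢ s).image (fun q => q.1 ⟨0, hd⟩ - q.2 ⟨0, hd⟩)).bddAbove
        refine ⟨M + 1, fun v hv w hw => Int.lt_add_one_of_le (hM ?_)⟩
        simp only [Finset.coe_image, mem_image]
        exact ⟨(v, w), by simp [hv, hw], rfl⟩
      refine ⟨fun _ => M, ?_⟩
      rw [Finset.disjoint_left]
      intro v hv hv'
      obtain ⟨w, hw, rfl⟩ := Finset.mem_image.1 hv'
      have := hM _ hv _ hw
      simp at this
    set τ : Config d → Config d := fun ω v => ω (v + x) with hτ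
    have hmp : MeasurePreserving τ μ μ := by
      refine ⟨by fun_prop, ?_⟩
      rw [eq_infinitePi_bern h0 h1 h]
      exact Measure.map_infinitePi_infinitePi_of_inj (add_left_injective x)
    have hdep' : DepOn (s.image (fun v => v + x)) (τ ⁻¹' cylinder s S) := by
      intro ω ω' hh hω
      refine hdep (τ ω) (τ ω') (fun v hv => hh _ (Finset.mem_image_of_mem _ hv)) hω
    have hCm := hdep.measurableSet
    have e1 : μ.real (cylinder s S ∩ τ ⁻¹' cylinder s S) = μ.real (cylinder s S) ^ 2 := by
      rw [measureReal_def, indep_dep h0 h1 h hx hdep hdep', hmp.measure_preimage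
        hCm.nullMeasurableSet, ENNReal.toReal_mul, sq, measureReal_def]
    have e2 : μ.real (symmDiff (cylinder s S) A) < ε := by
      rw [measureReal_def]
      exact ENNReal.toReal_lt_of_lt_ofReal hCA
    have e3 : μ.real (symmDiff (τ ⁻¹' cylinder s S) A) < ε := by
      have : symmDiff (τ ⁻¹' cylinder s S) A = τ ⁻¹' (symmDiff (cylinder s S) A) := by
        conv_lhs => rw [← hinv x]
        rfl
      rw [this, measureReal_def, hmp.measure_preimage (hCm.symmDiff hA).nullMeasurableSet]
      exact e2
    have e4 := abs_le.1 (abs_measureReal_sub_le_measureReal_symmDiff (μ := μ)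
      hCm.nullMeasurableSet hA.nullMeasurableSet)
    have e5 : μ.real A ≤ μ.real (cylinder s S ∩ τ ⁻¹' cylinder s S) +
        μ.real (symmDiff (cylinder s S) A) + μ.real (symmDiff (τ ⁻¹' cylinder s S) A) := by
      refine le_trans (measureReal_mono (s₂ := ((cylinder s S ∩ τ ⁻¹' cylinder s S) ∪
        symmDiff (cylinder s S) A) ∪ symmDiff (τ ⁻¹' cylinder s S) A) ?_) ?_
      · intro ω hω
        simp only [mem_union, mem_inter_iff, mem_symmDiff]
        tauto
      · exact (measureReal_union_le _ _).trans (by gcongr; exact measureReal_union_le _ _)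
    have : μ.real (cylinder s S) ^ 2 ≤ (μ.real A + ε) ^ 2 := by
      gcongr
      linarith
    linarith
  have hle : μ.real A ≤ μ.real A ^ 2 := by
    have ht : Filter.Tendsto (fun ε : ℝ => (μ.real A + ε) ^ 2 + 2 * ε) (nhdsWithin 0 (Ioi 0))
        (nhds (μ.real A ^ 2)) := by
      have : Continuous (fun ε : ℝ => (μ.real A + ε) ^ 2 + 2 * ε) := by fun_prop
      have := this.tendsto 0
      simp only [add_zero, mul_zero] at this
      exact this.mono_left nhdsWithin_le_nhds
    refine ge_of_tendsto ht ?_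
    filter_upwards [self_mem_nhdsWithin] with ε hε using key ε hε
  have hp : 0 < μ.real A := ENNReal.toReal_pos hpos.ne' (measure_ne_top _ _)
  have h1' : μ.real A ≤ 1 := measureReal_le_one
  have : μ.real A = 1 := by nlinarith
  rw [measureReal_def] at this
  rwa [ENNReal.toReal_eq_one_iff] at this

/-- `W ω ξ A F t n`: starting from `t` (label `n`), there is a self-avoiding continuation in `F`
reading `ξ (n+1), ξ (n+2), …` and ending in `A`. -/
inductive W {d : ℕ} (ω : Config d) (ξ : ℕ → Bool) (A : Set (Vtx d)) :
    Finset (Vtx d) → Vtx d → ℕ → Prop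
  | nil {F : Finset (Vtx d)} {t : Vtx d} {n : ℕ} (h : t ∈ A) : W ω ξ A F t n
  | step {F : Finset (Vtx d)} {t u : Vtx d} {n : ℕ} (hu : u ∈ F) (ha : adj t u)
      (hw : ω u = ξ (n + 1)) (h : W ω ξ A (F.erase u) u (n + 1)) : W ω ξ A F t n

section comb

variable {d : ℕ} {A : Set (Vtx d)}

lemma W.mono {ω : Config d} {ξ : ℕ → Bool} {F : Finset (Vtx d)} {t : Vtx d} {n : ℕ}
    (h : W ω ξ A F t n) : ∀ {F' : Finset (Vtx d)}, F ⊆ F' → W ω ξ A F' t n := by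
  induction h with
  | nil h => intro F' _; exact .nil h
  | step hu ha hw h ih =>
    intro F' hF
    exact .step (hF hu) ha hw (ih (Finset.erase_subset_erase _ hF))

lemma W.dep {ω ω' : Config d} {ξ : ℕ → Bool} {F : Finset (Vtx d)} {t : Vtx d} {n : ℕ}
    (h : W ω ξ A F t n) : (∀ v ∈ F, ω v = ω' v) → W ω' ξ A F t n := by
  induction h with
  | nil h => intro _; exact .nil h
  | step hu ha hw h ih =>
    intro hF
    refine .step hu ha (by rw [← hF _ hu, hw]) (ih fun v hv => hF v (Finset.mem_of_mem_erase hv))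

lemma W.relabel {ω : Config d} {F : Finset (Vtx d)} {t : Vtx d} {n : ℕ}
    (h : W ω (fun _ => true) A F t n) : ∀ m, W ω (fun _ => true) A F t m := by
  induction h with
  | nil h => intro _; exact .nil h
  | step hu ha hw h ih => intro m; exact .step hu ha hw (ih _)

lemma W.erase {ω : Config d} {F : Finset (Vtx d)} {t : Vtx d} {n : ℕ} (u : Vtx d) (m : ℕ)
    (h : W ω (fun _ => true) A F t n) :
    W ω (fun _ => true) A (F.erase u) t n ∨
      (ω u = true ∧ W ω (fun _ => true) A (F.erase u) u m) := by
  induction h with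
  | nil h => exact .inl (.nil h)
  | @step F t v n hu ha hw h ih =>
    by_cases hvu : v = u
    · subst hvu
      exact .inr ⟨hw, h.relabel m⟩
    · rcases ih with ih | ⟨h1, ih⟩
      · left
        rw [Finset.erase_right_comm] at ih
        exact .step (Finset.mem_erase.2 ⟨hvu, hu⟩) ha hw ih
      · right
        exact ⟨h1, ih.mono (Finset.erase_subset_erase _ (Finset.erase_subset _ _))⟩

lemma W.erase_self {ω : Config d} {F : Finset (Vtx d)} {t : Vtx d} {n : ℕ}
    (h : W ω (fun _ => true) A F t n) : W ω (fun _ => true) A (F.erase t) t n := by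
  rcases h.erase t n with h | h
  · exact h
  · exact h.2

/-- The event. -/
def EW (ξ : ℕ → Bool) (A : Set (Vtx d)) (T : Set (Vtx d × ℕ)) (F : Finset (Vtx d)) :
    Set (Config d) := {ω | ∃ t ∈ T, W ω ξ A F t.1 t.2}

lemma EW_dep (ξ : ℕ → Bool) (T : Set (Vtx d × ℕ)) (F : Finset (Vtx d)) :
    DepOn F (EW ξ A T F) := by
  rintro ω ω' h ⟨t, ht, hw⟩
  exact ⟨t, ht, hw.dep h⟩

lemma EW_mono (ξ : ℕ → Bool) {T T' : Set (Vtx d × ℕ)} (hT : T ⊆ T') (F : Finset (Vtx d)) :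
    EW ξ A T F ⊆ EW ξ A T' F := by
  rintro ω ⟨t, ht, hw⟩
  exact ⟨t, hT ht, hw⟩

lemma domination {p p' : ℝ} (h0 : 0 ≤ p) (h1 : p ≤ 1) (h0' : 0 ≤ p') (h1' : p' ≤ 1)
    (hpp : p' ≤ p) (hpp' : p' ≤ 1 - p) {μ μ' : Measure (Config d)}
    (hμ : IsBernoulliFam p μ) (hμ' : IsBernoulliFam p' μ') (ξ : ℕ → Bool) (k : ℕ) :
    ∀ (F : Finset (Vtx d)), F.card = k → ∀ (T : Set (Vtx d × ℕ)),
    μ'.real (EW (fun _ => true) A T F) ≤ μ.real (EW ξ A T F) := by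
  have := hμ.1
  have := hμ'.1
  induction k with
  | zero =>
    intro F hF T
    rw [Finset.card_eq_zero] at hF
    subst hF
    by_cases hA : ∃ t ∈ T, t.1 ∈ A
    · obtain ⟨t, ht, htA⟩ := hA
      have : EW ξ A T ∅ = univ := eq_univ_of_forall fun ω => ⟨t, ht, .nil htA⟩
      rw [this]
      simp [measureReal_le_one]
    · have : EW (fun _ => true) A T ∅ = ∅ := by
        refine eq_empty_of_forall_notMem ?_
        rintro ω ⟨t, ht, hw⟩
        cases hw with
        | nil h => exact hA ⟨t, ht, h⟩
        | step hu => simp at hu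
      rw [this]
      simp
  | succ k ih =>
    intro F hF T
    by_cases hadj : ∃ t ∈ T, ∃ u ∈ F, adj t.1 u
    · obtain ⟨t, ht, u, hu, ha⟩ := hadj
      set T' := insert (u, t.2 + 1) T with hT'
      have hc : (F.erase u).card = k := by rw [Finset.card_erase_of_mem hu, hF]; rfl
      have iT := ih (F.erase u) hc T
      have iT' := ih (F.erase u) hc T'
      have hun : u ∉ F.erase u := Finset.notMem_erase u F
      have m1 : μ.real (EW ξ A T (F.erase u)) ≤ μ.real (EW ξ A T' (F.erase u)) :=
        measureReal_mono (EW_mono ξ (subset_insert _ _) _)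
      have up : μ'.real (EW (fun _ => true) A T F) ≤
          p' * μ'.real (EW (fun _ => true) A T' (F.erase u)) +
          (1 - p') * μ'.real (EW (fun _ => true) A T (F.erase u)) := by
        have a := site_indep h0' h1' hμ' hun true (EW_dep (A := A) (fun _ => true) T' (F.erase u))
        have b := site_indep h0' h1' hμ' hun false (EW_dep (A := A) (fun _ => true) T (F.erase u))
        simp only [if_true, Bool.false_eq_true, if_false] at a b
        rw [← a, ← b]
        refine le_trans (measureReal_mono ?_) (measureReal_union_le _ _)
        rintro ω ⟨s, hs, hw⟩
        rcases hω : ω u with _ | _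
        · right
          refine ⟨hω, s, hs, ?_⟩
          rcases hw.erase u 0 with h | h
          · exact h
          · simp [hω] at h
        · left
          refine ⟨hω, ?_⟩
          rcases hw.erase u (t.2 + 1) with h | h
          · exact ⟨s, mem_insert_of_mem _ hs, h⟩
          · exact ⟨(u, t.2 + 1), mem_insert _ _, h.2⟩
      set r : ℝ := if ξ (t.2 + 1) then p else 1 - p with hr
      have hr1 : p' ≤ r := by rw [hr]; split_ifs <;> linarith
      have low : r * μ.real (EW ξ A T' (F.erase u)) + (1 - r) * μ.real (EW ξ A T (F.erase u)) ≤
          μ.real (EW ξ A T F) := by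
        have a := site_indep h0 h1 hμ hun (ξ (t.2 + 1)) (EW_dep (A := A) ξ T' (F.erase u))
        have b := site_indep h0 h1 hμ hun (!ξ (t.2 + 1)) (EW_dep (A := A) ξ T (F.erase u))
        have hr2 : (if (!ξ (t.2 + 1)) then p else 1 - p) = 1 - r := by
          rw [hr]; cases ξ (t.2 + 1) <;> simp
        rw [hr2] at b
        rw [← hr] at a
        rw [← a, ← b, ← measureReal_union]
        · refine measureReal_mono ?_
          rintro ω (⟨hω, s, hs, hw⟩ | ⟨hω, s, hs, hw⟩)
          · rcases hs with rfl | hs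
            · exact ⟨t, ht, .step hu ha hω hw⟩
            · exact ⟨s, hs, hw.mono (Finset.erase_subset _ _)⟩
          · exact ⟨s, hs, hw.mono (Finset.erase_subset _ _)⟩
        · rw [Set.disjoint_left]
          rintro ω ⟨h1, -⟩ ⟨h2, -⟩
          simp only [mem_ofPred_eq] at h1 h2
          rw [h1] at h2
          simp at h2
        · exact (site_dep _ _).measurableSet.inter (EW_dep _ _ _).measurableSet
      have s1 : p' * μ'.real (EW (fun _ => true) A T' (F.erase u)) ≤
          p' * μ.real (EW ξ A T' (F.erase u)) := by gcongr
      have s2 : (1 - p') * μ'.real (EW (fun _ => true) A T (F.erase u)) ≤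
          (1 - p') * μ.real (EW ξ A T (F.erase u)) :=
        mul_le_mul_of_nonneg_left iT (by linarith)
      nlinarith [mul_nonneg (sub_nonneg.2 hr1) (sub_nonneg.2 m1)]
    · by_cases hA : ∃ t ∈ T, t.1 ∈ A
      · obtain ⟨t, ht, htA⟩ := hA
        have : EW ξ A T F = univ := eq_univ_of_forall fun ω => ⟨t, ht, .nil htA⟩
        rw [this]
        simp [measureReal_le_one]
      · have : EW (fun _ => true) A T F = ∅ := by
          refine eq_empty_of_forall_notMem ?_
          rintro ω ⟨t, ht, hw⟩
          cases hw with
          | nil h => exact hA ⟨t, ht, h⟩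
          | step hu ha => exact hadj ⟨t, ht, _, hu, ha⟩
        rw [this]
        simp

/-- extraction of a path -/
lemma W.path {ω : Config d} {ξ : ℕ → Bool} {F : Finset (Vtx d)} {t : Vtx d} {n : ℕ}
    (h : W ω ξ A F t n) : t ∉ F → ∃ (k : ℕ) (γ : ℕ → Vtx d), γ 0 = t ∧ γ k ∈ A ∧
      (∀ i ≤ k, ∀ j ≤ k, γ i = γ j → i = j) ∧ (∀ i < k, adj (γ i) (γ (i + 1))) ∧
      (∀ i < k, ω (γ (i + 1)) = ξ (n + (i + 1))) ∧ (∀ i < k, γ (i + 1) ∈ F) := by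
  induction h with
  | @nil F t n h =>
    intro _
    exact ⟨0, fun _ => t, rfl, h, by intros; omega, by simp, by simp, by simp⟩
  | @step F t u n hu ha hw h ih =>
    intro ht
    obtain ⟨k, γ, g0, gA, ginj, gadj, gw, gF⟩ := ih (Finset.notMem_erase _ _)
    have hmem : ∀ i ≤ k, γ i ∈ F := by
      intro i hi
      rcases i with _ | i
      · rw [g0]; exact hu
      · exact Finset.mem_of_mem_erase (gF i hi)
    refine ⟨k + 1, fun i => Nat.casesOn i t γ, rfl, gA, ?_, ?_, ?_, ?_⟩
    · rintro (_ | i) hi (_ | j) hj hij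
      · rfl
      · have hij' : t = γ j := hij
        exact absurd (hij' ▸ hmem j (by omega)) ht
      · have hij' : γ i = t := hij
        exact absurd (hij' ▸ hmem i (by omega)) ht
      · rw [ginj i (by omega) j (by omega) hij]
    · rintro (_ | i) hi
      · simpa [g0] using ha
      · exact gadj i (by omega)
    · rintro (_ | i) hi
      · simpa [g0] using hw
      · have := gw i (by omega)
        simp only
        rw [this]
        congr 1
        omega
    · rintro i hi
      exact hmem i (by omega)

lemma adj_coord {u v : Vtx d} (h : adj u v) (j : Fin d) : |v j - u j| ≤ 1 := by
  have : (u j - v j) ^ 2 ≤ 1 := by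
    rw [← h]
    exact Finset.single_le_sum (f := fun i => (u i - v i) ^ 2) (fun i _ => sq_nonneg _)
      (Finset.mem_univ j)
  rw [abs_le]
  constructor <;> nlinarith

lemma path_coord {γ : ℕ → Vtx d} {k : ℕ} (h : ∀ i < k, adj (γ i) (γ (i + 1))) (j : Fin d) :
    ∀ i ≤ k, |γ i j - γ 0 j| ≤ i := by
  intro i
  induction i with
  | zero => simp
  | succ i ih =>
    intro hi
    have a := ih (by omega)
    have b := adj_coord (h i (by omega)) j
    rw [abs_le] at *
    push_cast
    constructor <;> linarith

/-- Finite initial segments. -/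
def PN (ω : Config d) (ξ : ℕ → Bool) (v : Vtx d) (N : ℕ) : Prop :=
  ∃ γ : ℕ → Vtx d, γ 0 = v ∧ (∀ i ≤ N, ∀ j ≤ N, γ i = γ j → i = j) ∧
    (∀ i < N, adj (γ i) (γ (i + 1))) ∧ (∀ i ≤ N, ω (γ i) = ξ i)

lemma PN.anti {ω : Config d} {ξ : ℕ → Bool} {v : Vtx d} {M N : ℕ} (hMN : M ≤ N)
    (h : PN ω ξ v N) : PN ω ξ v M := by
  obtain ⟨γ, a, b, c, e⟩ := h
  exact ⟨γ, a, fun i hi j hj => b i (by omega) j (by omega), fun i hi => c i (by omega),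
    fun i hi => e i (by omega)⟩

lemma konig {ω : Config d} {ξ : ℕ → Bool} {v : Vtx d} : seesWord ω ξ v ↔ ∀ N, PN ω ξ v N := by
  constructor
  · rintro ⟨γ, g0, ginj, gadj, -, gw⟩ N
    exact ⟨γ, g0, fun i _ j _ h => ginj h, fun i _ => gadj i, fun i _ => gw i⟩
  intro h
  let B : ℕ → Set (Vtx d) := fun i => Icc (fun j => v j - i) (fun j => v j + i)
  let K : Set (ℕ → Vtx d) := Set.pi univ B
  have hK : IsCompact K := isCompact_univ_pi fun i => (Set.finite_Icc _ _).isCompact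
  let C : ℕ → Set (ℕ → Vtx d) := fun N => K ∩ {γ | γ 0 = v ∧
    (∀ i ≤ N, ∀ j ≤ N, γ i = γ j → i = j) ∧
    (∀ i < N, adj (γ i) (γ (i + 1))) ∧ (∀ i ≤ N, ω (γ i) = ξ i)}
  have cl2 : ∀ (i j : ℕ) (P : Vtx d → Vtx d → Prop), IsClosed {γ : ℕ → Vtx d | P (γ i) (γ j)} := by
    intro i j P
    have : Continuous (fun γ : ℕ → Vtx d => (γ i, γ j)) := by fun_prop
    exact (isClosed_discrete {q : Vtx d × Vtx d | P q.1 q.2}).preimage this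
  have hcl : ∀ N, IsClosed (C N) := by
    intro N
    refine hK.isClosed.inter ?_
    refine IsClosed.and (cl2 0 0 (fun a _ => a = v)) (IsClosed.and ?_ (IsClosed.and ?_ ?_))
    · simp only [ofPred_forall]
      exact isClosed_iInter fun i => isClosed_iInter fun _ => isClosed_iInter fun j =>
        isClosed_iInter fun _ => cl2 i j (fun a b => a = b → i = j)
    · simp only [ofPred_forall]
      exact isClosed_iInter fun i => isClosed_iInter fun _ => cl2 i (i + 1) adj
    · simp only [ofPred_forall]
      exact isClosed_iInter fun i => isClosed_iInter fun _ => cl2 i i (fun a _ => ω a = ξ i)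
  have hne : (⋂ N, C N).Nonempty := by
    refine IsCompact.nonempty_iInter_of_sequence_nonempty_isCompact_isClosed C ?_ ?_ ?_ hcl
    · rintro N γ ⟨hk, a, b, c, e⟩
      exact ⟨hk, a, fun i hi j hj => b i (by omega) j (by omega), fun i hi => c i (by omega),
        fun i hi => e i (by omega)⟩
    · intro N
      obtain ⟨γ, a, b, c, e⟩ := h N
      refine ⟨fun i => γ (min i N), ?_, by simpa using a, ?_, ?_, ?_⟩
      · intro i _
        have hb := fun j => abs_le.1 (path_coord c j (min i N) (min_le_right _ _))
        have hm : ((min i N : ℕ) : ℤ) ≤ i := by exact_mod_cast min_le_left _ _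
        constructor
        · intro j
          have := (hb j).1
          rw [a] at this
          simp only
          linarith
        · intro j
          have := (hb j).2
          rw [a] at this
          simp only
          linarith
      · intro i hi j hj hij
        simp only [min_eq_left hi, min_eq_left hj] at hij
        exact b i hi j hj hij
      · intro i hi
        have h1 : min i N = i := min_eq_left hi.le
        have h2 : min (i + 1) N = i + 1 := min_eq_left hi
        simp only [h1, h2]
        exact c i hi
      · intro i hi
        simp only [min_eq_left hi]
        exact e i hi
    · exact hK.of_isClosed_subset (hcl 0) inter_subset_left
  obtain ⟨γ, hγ⟩ := hne
  rw [mem_iInter] at hγ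
  refine ⟨γ, (hγ 0).2.1, fun i j hij => ?_, fun i => ?_, fun _ => mem_univ _, fun i => ?_⟩
  · exact (hγ (max i j)).2.2.1 i (le_max_left _ _) j (le_max_right _ _) hij
  · exact (hγ (i + 1)).2.2.2.1 i (by omega)
  · exact (hγ i).2.2.2.2 i le_rfl

lemma measurable_PN (v : Vtx d) (N : ℕ) :
    MeasurableSet {q : Config d × (ℕ → Bool) | PN q.1 q.2 v N} := by
  refine IsOpen.measurableSet ?_
  simp only [PN, ofPred_exists]
  refine isOpen_iUnion fun γ => ?_
  refine IsOpen.and isOpen_const (IsOpen.and isOpen_const (IsOpen.and isOpen_const ?_))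
  have : {q : Config d × (ℕ → Bool) | ∀ i ≤ N, q.1 (γ i) = q.2 i} =
      ⋂ i ∈ Finset.range (N + 1), {q : Config d × (ℕ → Bool) | q.1 (γ i) = q.2 i} := by
    ext q
    simp
  rw [this]
  refine isOpen_biInter_finset fun i _ => ?_
  have : Continuous (fun q : Config d × (ℕ → Bool) => (q.1 (γ i), q.2 i)) := by fun_prop
  exact (isOpen_discrete {r : Bool × Bool | r.1 = r.2}).preimage this

lemma measurable_seen :
    MeasurableSet {q : Config d × (ℕ → Bool) | ∃ v, seesWord q.1 q.2 v} := by
  simp only [konig, ofPred_exists, ofPred_forall]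
  exact MeasurableSet.iUnion fun v => MeasurableSet.iInter fun N => measurable_PN v N

lemma perc_sub {ω : Config d} (hA : Aᶜ.Finite) (h : PercolatesAt ω (fun _ => 0)) :
    ∃ F : Finset (Vtx d), ω ∈ EW (fun _ => true) A {((fun _ => 0), 0)} (F.erase (fun _ => 0)) := by
  classical
  obtain ⟨C, h0, hinf, hC, hcon⟩ := h
  obtain ⟨u, huC, huA⟩ := hinf.exists_notMem_finite hA
  rw [notMem_compl_iff] at huA
  obtain ⟨n, γ, g0, gn, gadj, gC⟩ := hcon _ h0 u huC
  let F := (Finset.range (n + 1)).image γ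
  have key : ∀ k ≤ n, W ω (fun _ => true) A F (γ (n - k)) 0 := by
    intro k
    induction k with
    | zero => intro _; refine .nil ?_; simpa [gn] using huA
    | succ k ih =>
      intro hk
      have w := (ih (by omega)).erase_self.relabel 1
      have e : n - k = n - (k + 1) + 1 := by omega
      refine .step (u := γ (n - k)) ?_ ?_ (hC _ (gC _ (by omega))) w
      · exact Finset.mem_image_of_mem _ (Finset.mem_range.2 (by omega))
      · rw [e]; exact gadj _ (by omega)
  have w := key n le_rfl
  rw [Nat.sub_self, g0] at w
  exact ⟨F, _, rfl, w.erase_self⟩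

lemma seen_pos {p p' : ℝ} (h0 : 0 < p) (h1 : p < 1) (h0' : 0 ≤ p') (h1' : p' ≤ 1)
    (hpp : p' ≤ p) (hpp' : p' ≤ 1 - p) {μ μ' : Measure (Config d)}
    (hμ : IsBernoulliFam p μ) (hμ' : IsBernoulliFam p' μ')
    (hθ : 0 < μ' {ω | PercolatesAt ω (fun _ => 0)}) (ξ : ℕ → Bool) :
    0 < μ {ω | seesWord ω ξ (fun _ => 0)} := by
  classical
  have := hμ.1
  have := hμ'.1
  set θ := μ' {ω | PercolatesAt ω (fun _ => 0)} with hθd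
  set c : ENNReal := ENNReal.ofReal (if ξ 0 then p else 1 - p) with hc
  have hcpos : 0 < c := by
    rw [hc, ENNReal.ofReal_pos]; split_ifs <;> linarith
  have key : ∀ R : ℕ, c * θ ≤ μ {ω | PN ω ξ (fun _ => 0) R} := by
    intro R
    set A : Set (Vtx d) := (Icc (fun _ => -(R : ℤ)) (fun _ => (R : ℤ)))ᶜ with hA
    have hfin : Aᶜ.Finite := by rw [hA, compl_compl]; exact Set.finite_Icc _ _
    let E : Finset (Vtx d) → Set (Config d) := fun F =>
      EW (fun _ => true) A {((fun _ => 0), 0)} (F.erase (fun _ => 0))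
    have hdir : Directed (· ⊆ ·) E := by
      intro F G
      refine ⟨F ∪ G, ?_, ?_⟩
      · rintro ω ⟨t, ht, hw⟩
        exact ⟨t, ht, hw.mono (Finset.erase_subset_erase _ Finset.subset_union_left)⟩
      · rintro ω ⟨t, ht, hw⟩
        exact ⟨t, ht, hw.mono (Finset.erase_subset_erase _ Finset.subset_union_right)⟩
    have hle : θ ≤ ⨆ F, μ' (E F) := by
      rw [← hdir.measure_iUnion]
      refine measure_mono fun ω hω => ?_
      exact mem_iUnion.2 (perc_sub hfin hω)
    refine (mul_le_mul_right hle c).trans ?_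
    rw [ENNReal.mul_iSup]
    refine iSup_le fun F => ?_
    have hdom : μ' (E F) ≤ μ (EW ξ A {((fun _ => 0), 0)} (F.erase (fun _ => 0))) := by
      have := domination (A := A) h0.le h1.le h0' h1' hpp hpp' hμ hμ' ξ _
        (F.erase (fun _ => 0)) rfl {((fun _ => 0), 0)}
      exact (ENNReal.toReal_le_toReal (measure_ne_top _ _) (measure_ne_top _ _)).1 this
    refine (mul_le_mul_right hdom c).trans ?_
    rw [hc, ← site_prob hμ (fun _ => 0), ← indep_dep h0.le h1.le hμ
      (Finset.disjoint_singleton_left.2 (Finset.notMem_erase _ F)) (site_dep _ _) (EW_dep _ _ _)]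
    refine measure_mono ?_
    rintro ω ⟨hω, t, rfl, hw⟩
    obtain ⟨k, γ, g0, gA, ginj, gadj, gw, -⟩ := hw.path (Finset.notMem_erase _ F)
    have hk : R ≤ k := by
      by_contra hlt
      refine gA ?_
      have hb := fun j => abs_le.1 (path_coord gadj j k le_rfl)
      have hkR : (k : ℤ) ≤ R := by exact_mod_cast (not_le.1 hlt).le
      simp only [g0] at hb
      constructor
      · intro j; have := (hb j).1; simp only; linarith
      · intro j; have := (hb j).2; simp only; linarith
    refine PN.anti hk ⟨γ, g0, ginj, gadj, ?_⟩
    rintro (_ | i) hi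
    · rw [g0]; exact hω
    · rw [gw i hi]; simp
  have hset : {ω | seesWord ω ξ (fun _ => 0)} = ⋂ R, {ω : Config d | PN ω ξ (fun _ => 0) R} := by
    ext ω; simp [konig]
  have hanti : Antitone (fun R => {ω : Config d | PN ω ξ (fun _ => 0) R}) :=
    fun M N hMN ω hω => PN.anti hMN hω
  have hm : ∀ R, MeasurableSet {ω : Config d | PN ω ξ (fun _ => 0) R} := fun R =>
    measurableSet_preimage (f := fun ω : Config d => (ω, ξ)) (by fun_prop)
      (measurable_PN (fun _ => 0) R)
  rw [hset, hanti.measure_iInter (fun R => (hm R).nullMeasurableSet) ⟨0, measure_ne_top _ _⟩]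
  exact lt_of_lt_of_le (ENNReal.mul_pos hcpos.ne' hθ.ne') (le_iInf key)

lemma seen_shift (x : Vtx d) (ω : Config d) (ξ : ℕ → Bool)
    (h : ∃ v, seesWord (fun v => ω (v + x)) ξ v) : ∃ v, seesWord ω ξ v := by
  obtain ⟨v, γ, g0, ginj, gadj, -, gw⟩ := h
  refine ⟨v + x, fun i => γ i + x, by simp [g0], fun i j h => ginj (add_right_cancel h), fun i => ?_,
    fun _ => mem_univ _, gw⟩
  have := gadj i
  simpa [adj] using this

lemma seen_one (hd : 0 < d) {p p' : ℝ} (h0 : 0 < p) (h1 : p < 1) (h0' : 0 ≤ p') (h1' : p' ≤ 1)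
    (hpp : p' ≤ p) (hpp' : p' ≤ 1 - p) {μ μ' : Measure (Config d)}
    (hμ : IsBernoulliFam p μ) (hμ' : IsBernoulliFam p' μ')
    (hθ : 0 < μ' {ω | PercolatesAt ω (fun _ => 0)}) (ξ : ℕ → Bool) :
    μ {ω | ∃ v, seesWord ω ξ v} = 1 := by
  refine zero_one hd h0.le h1.le hμ ?_ ?_ ?_
  · exact measurableSet_preimage (f := fun ω : Config d => (ω, ξ)) (by fun_prop) measurable_seen
  · intro x
    ext ω
    constructor
    · exact fun h => seen_shift x ω ξ h
    · intro h
      refine seen_shift (-x) _ ξ ?_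
      simpa using h
  · refine lt_of_lt_of_le (seen_pos h0 h1 h0' h1' hpp hpp' hμ hμ' hθ ξ) (measure_mono ?_)
    exact fun ω h => ⟨_, h⟩

lemma perc_one (hd : 0 < d) {μ : Measure (Config d)} (hμ : IsBernoulliFam 1 μ) :
    0 < μ {ω | PercolatesAt ω (fun _ => 0)} := by
  classical
  have := hμ.1
  have hae : ∀ᵐ ω ∂μ, ∀ v, ω v = true := by
    rw [ae_all_iff]
    intro v
    rw [ae_iff]
    have := site_prob hμ v false
    simpa using this
  let e : ℤ → Vtx d := fun k i => if i = ⟨0, hd⟩ then k else 0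
  have he : ∀ a b : ℤ, (a - b) ^ 2 = 1 → adj (e a) (e b) := by
    intro a b h
    unfold adj
    rw [Finset.sum_eq_single ⟨0, hd⟩]
    · simpa [e] using h
    · intro j _ hj; simp [e, hj]
    · simp
  have hinj : Function.Injective (fun n : ℕ => e n) := by
    intro a b h
    have := congrFun h ⟨0, hd⟩
    simpa [e] using this
  have hall : ∀ᵐ ω ∂μ, PercolatesAt ω (fun _ => 0) := by
    filter_upwards [hae] with ω hω
    refine ⟨range (fun n : ℕ => e n), ⟨0, ?_⟩, infinite_range_of_injective hinj, fun u _ => hω u, ?_⟩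
    · ext i; simp [e]
    rintro _ ⟨a, rfl⟩ _ ⟨b, rfl⟩
    rcases le_total a b with hab | hab
    · refine ⟨b - a, fun i => e ((a + i : ℕ) : ℤ), by simp, ?_, ?_, ?_⟩
      · simp only; congr 2; omega
      · intro i _; refine he _ _ ?_; push_cast; ring
      · intro i _; exact ⟨a + i, rfl⟩
    · refine ⟨a - b, fun i => e ((a - i : ℕ) : ℤ), by simp, ?_, ?_, ?_⟩
      · simp only; congr 2; omega
      · intro i hi
        refine he _ _ ?_
        have : ((a - i : ℕ) : ℤ) = ((a - (i + 1) : ℕ) : ℤ) + 1 := by omega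
        rw [this]; ring
      · intro i _; exact ⟨a - i, rfl⟩
  have : μ {ω | PercolatesAt ω (fun _ => 0)} = 1 := by
    rw [← measure_univ (μ := μ)]
    exact measure_congr (Filter.eventuallyEq_univ.2 hall)
  rw [this]; exact one_pos

end comb

end helpers

/-- **Almost all words are seen** : for `d ≥ 3`,
`p ∈ (p_c^site(ℤ^d), 1 − p_c^site(ℤ^d))` and `q ∈ (0,1)`, `ℙ_p`-almost surely,
`μ_q`-almost every word is seen from some vertex of `ℤ^d` :
`ℙ_p(μ_q(S_∞) = 1) = 1`, where `μ_q` is the Bernoulli-`q` product measure on words. -/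
theorem almost_all_words_seen
    (d : ℕ) (hd : 3 ≤ d)
    (ℙ : ℝ → Measure (Config d))
    (hP : ∀ q : ℝ, 0 ≤ q → q ≤ 1 → IsBernoulliFam q (ℙ q))
    (p : ℝ) (hp : pcSite d ℙ < p) (hp' : p < 1 - pcSite d ℙ)
    (q : ℝ) (hq0 : 0 < q) (hq1 : q < 1)
    (ν : Measure (ℕ → Bool)) (hν : IsBernoulliFam q ν) :
    ℙ p {ω | ν {ξ | ∃ v : Vtx d, seesWord ω ξ v} = 1} = 1 := by
  have hne : {p : ℝ | p ∈ Set.Icc (0 : ℝ) 1 ∧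
      0 < ℙ p {ω | PercolatesAt ω (fun _ => 0)}}.Nonempty :=
    ⟨1, ⟨zero_le_one, le_rfl⟩, perc_one (by omega) (hP 1 zero_le_one le_rfl)⟩
  have hpc0 : 0 ≤ pcSite d ℙ := Real.sInf_nonneg fun x hx => hx.1.1
  have h0 : 0 < p := by linarith
  have h1 : p < 1 := by linarith
  obtain ⟨p', ⟨⟨h0', h1'⟩, hθ⟩, hlt⟩ :=
    exists_lt_of_csInf_lt hne (show pcSite d ℙ < min p (1 - p) from lt_min hp (by linarith))
  have hμ := hP p h0.le h1.le
  have := hμ.1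
  have := hν.1
  have hone := fun ξ => seen_one (by omega) h0 h1 h0' h1' (hlt.le.trans (min_le_left _ _))
    (hlt.le.trans (min_le_right _ _)) hμ (hP p' h0' h1') hθ ξ
  have hms := measurable_seen (d := d)
  have hae2 : ∀ᵐ ω ∂(ℙ p), ∀ᵐ ξ ∂ν, ∃ v, seesWord ω ξ v := by
    refine (Measure.ae_ae_comm (p := fun ω ξ => ∃ v, seesWord ω ξ v) hms).2 ?_
    refine Filter.Eventually.of_forall fun ξ => ?_
    have hm : MeasurableSet {ω : Config d | ∃ v, seesWord ω ξ v} :=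
      measurableSet_preimage (f := fun ω : Config d => (ω, ξ)) (by fun_prop) hms
    exact (prob_compl_eq_zero_iff hm).2 (hone ξ)
  have : ∀ᵐ ω ∂(ℙ p), ν {ξ | ∃ v : Vtx d, seesWord ω ξ v} = 1 := by
    filter_upwards [hae2] with ω hω
    rw [← measure_univ (μ := ν)]
    exact measure_congr (Filter.eventuallyEq_univ.2 hω)
  exact (measure_congr (Filter.eventuallyEq_univ.2 this)).trans measure_univ

end PercWords
end
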